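/- arXiv:2506.02424 — 4 statements merged into one kernel-verified Lean document; each statement's English description precedes it below -/
import Mathlib

section
/- Let k and ℓ be nonnegative integers with k ≤ ℓ, let c ≥ 2, and let ξ be a real number with |ξ| ≤ c. Then |∫_{−1}^{1} x^k P_ℓ(x) e^{iξx} dx| ≤ (4k+2) · (c/2)^{ℓ+k} / Γ(ℓ−k+1). -/
open Real

noncomputable section

/-- The Legendre polynomial of degree `n`, via Rodrigues' formula. -/
def legendreP (n : ℕ) (x : ℝ) : ℝ :=
  (1 / (2 ^ n * (n.factorial : ℝ))) * iteratedDeriv n (fun t : ℝ => (t ^ 2 - 1) ^ n) x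

lemma aux_iter_poly (P : Polynomial ℝ) (n : ℕ) :
    iteratedDeriv n (fun t : ℝ => P.eval t) =
      fun t => ((Polynomial.derivative^[n]) P).eval t := by
  induction n generalizing P with
  | zero => simp
  | succ n ih =>
    rw [iteratedDeriv_succ']
    have : deriv (fun t : ℝ => P.eval t) = fun t => (Polynomial.derivative P).eval t := by
      funext t; exact P.deriv
    rw [this, ih, Function.iterate_succ_apply]

lemma aux_boundary (n m : ℕ) (h : m < n) (x : ℝ) (hx : x ^ 2 = 1) :
    ((Polynomial.derivative^[m]) ((Polynomial.X ^ 2 - 1 : Polynomial ℝ) ^ n)).eval x = 0 := by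
  obtain ⟨q, hq⟩ := Polynomial.pow_sub_dvd_iterate_derivative_pow
    (Polynomial.X ^ 2 - 1 : Polynomial ℝ) n m
  rw [hq]
  have : n - m ≠ 0 := by omega
  simp [hx, this]

lemma aux_ibp (n m : ℕ) (h : m ≤ n) (g : ℝ → ℂ) (hg : ContDiff ℝ ((⊤ : ℕ∞) : WithTop ℕ∞) g) :
    ‖∫ x in (-1 : ℝ)..1, ((((Polynomial.derivative^[m])
        ((Polynomial.X ^ 2 - 1 : Polynomial ℝ) ^ n)).eval x : ℝ) : ℂ) * g x‖ =
    ‖∫ x in (-1 : ℝ)..1, (((x ^ 2 - 1) ^ n : ℝ) : ℂ) * iteratedDeriv m g x‖ := by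
  induction m generalizing g with
  | zero => simp
  | succ m ih =>
    have hg' : ContDiff ℝ ((⊤ : ℕ∞) : WithTop ℕ∞) (deriv g) :=
      (contDiff_infty_iff_deriv.mp hg).2
    have hgd : Differentiable ℝ g := (contDiff_infty_iff_deriv.mp hg).1
    rw [iteratedDeriv_succ', ← ih (by omega) (deriv g) hg']
    set Q := (Polynomial.derivative^[m]) ((Polynomial.X ^ 2 - 1 : Polynomial ℝ) ^ n) with hQ
    rw [Function.iterate_succ_apply', ← hQ]
    have key := intervalIntegral.integral_mul_deriv_eq_deriv_mul (a := (-1 : ℝ)) (b := 1)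
      (u := fun x => ((Q.eval x : ℝ) : ℂ))
      (u' := fun x => (((Polynomial.derivative Q).eval x : ℝ) : ℂ))
      (v := g) (v' := deriv g)
      (fun x _ => (Q.hasDerivAt x).ofReal_comp)
      (fun x _ => (hgd x).hasDerivAt)
      (Continuous.intervalIntegrable (by fun_prop) _ _)
      (hg'.continuous.intervalIntegrable _ _)
    have h1 : Q.eval 1 = 0 := aux_boundary n m (by omega) 1 (by norm_num)
    have h2 : Q.eval (-1) = 0 := aux_boundary n m (by omega) (-1) (by norm_num)
    rw [key]
    simp [h1, h2]

lemma aux_pow (k i : ℕ) :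
    iteratedDeriv i (fun x : ℝ => (x : ℂ) ^ k) =
      fun x : ℝ => (k.descFactorial i : ℂ) * (x : ℂ) ^ (k - i) := by
  induction i with
  | zero => simp
  | succ i ih =>
    rw [iteratedDeriv_succ, ih]
    funext x
    have h := (((hasDerivAt_id x).ofReal_comp.pow (k - i)).const_mul (k.descFactorial i : ℂ)).deriv
    simp only [id] at h
    refine Eq.trans h ?_
    rw [Nat.descFactorial_succ, Nat.sub_sub]
    push_cast
    ring

lemma aux_exp (ξ : ℝ) (i : ℕ) :
    iteratedDeriv i (fun x : ℝ => Complex.exp (Complex.I * (ξ : ℂ) * (x : ℂ))) =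
      fun x : ℝ => (Complex.I * ξ) ^ i * Complex.exp (Complex.I * (ξ : ℂ) * (x : ℂ)) := by
  induction i with
  | zero => simp
  | succ i ih =>
    rw [iteratedDeriv_succ, ih]
    funext x
    have h := ((((hasDerivAt_id x).ofReal_comp.const_mul (Complex.I * (ξ : ℂ))).cexp).const_mul
      ((Complex.I * ξ) ^ i)).deriv
    simp only [id] at h
    refine Eq.trans h ?_
    push_cast
    ring

lemma aux_two_pow (k m : ℕ) (h : m ≤ k) : 2 ^ m ≤ (2 * k + 1) * m.factorial := by
  rcases Nat.eq_zero_or_pos m with rfl | hm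
  · simp
  · have h2 : 2 ^ m ≤ 2 * m.factorial := by
      clear h
      induction m, hm using Nat.le_induction with
      | base => simp
      | succ m hm ih =>
        rw [pow_succ, Nat.factorial_succ]
        nlinarith [Nat.factorial_pos m]
    nlinarith [Nat.factorial_pos m]

lemma aux_term (k ℓ i : ℕ) (hkℓ : k ≤ ℓ) (hi : i ≤ ℓ) (c : ℝ) (hc : 2 ≤ c) :
    (1 / (2 ^ ℓ * (ℓ.factorial : ℝ))) *
      ((ℓ.choose i : ℝ) * (k.descFactorial i : ℝ) * c ^ (ℓ - i)) ≤
    (2 * (k : ℝ) + 1) * (c / 2) ^ (ℓ + k) / ((ℓ - k).factorial : ℝ) *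
      ((k.choose i : ℝ) / 2 ^ k) := by
  rcases lt_or_ge k i with h | h
  · rw [Nat.descFactorial_of_lt h, Nat.choose_eq_zero_of_lt h]; simp
  have e1 : (ℓ.choose i : ℝ) * i.factorial * (ℓ - i).factorial = ℓ.factorial := by
    exact_mod_cast Nat.choose_mul_factorial_mul_factorial hi
  have e2 : (k.descFactorial i : ℝ) = i.factorial * k.choose i := by
    exact_mod_cast Nat.descFactorial_eq_factorial_mul_choose k i
  have e3 : c ^ (ℓ - i) = (c / 2) ^ (ℓ - i) * 2 ^ (ℓ - i) := by
    rw [← mul_pow]; congr 1; ring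
  have e4 : (2 : ℝ) ^ ℓ = 2 ^ (ℓ - i) * 2 ^ i := by rw [← pow_add]; congr 1; omega
  have e5 : (2 : ℝ) ^ k = 2 ^ (k - i) * 2 ^ i := by rw [← pow_add]; congr 1; omega
  have p1 : (0 : ℝ) < i.factorial := by positivity
  have p2 : (0 : ℝ) < (ℓ - i).factorial := by positivity
  have p3 : (0 : ℝ) < (ℓ - k).factorial := by positivity
  have p4 : (0 : ℝ) < ℓ.choose i := by exact_mod_cast Nat.choose_pos hi
  have f1 : (c / 2) ^ (ℓ - i) ≤ (c / 2) ^ (ℓ + k) :=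
    pow_le_pow_right₀ (by linarith) (by omega)
  have f2 : ((ℓ - k).factorial : ℝ) * (k - i).factorial ≤ (ℓ - i).factorial := by
    have := Nat.factorial_mul_factorial_dvd_factorial_add (ℓ - k) (k - i)
    have e : ℓ - k + (k - i) = ℓ - i := by omega
    rw [e] at this
    exact_mod_cast Nat.le_of_dvd (Nat.factorial_pos _) this
  have f3 : (2 : ℝ) ^ (k - i) ≤ (2 * k + 1) * (k - i).factorial := by
    exact_mod_cast aux_two_pow k (k - i) (by omega)
  have lhs : (1 / (2 ^ ℓ * (ℓ.factorial : ℝ))) *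
      ((ℓ.choose i : ℝ) * (k.descFactorial i : ℝ) * c ^ (ℓ - i)) =
      ((k.choose i : ℝ) / 2 ^ i) * ((c / 2) ^ (ℓ - i) * (1 / (ℓ - i).factorial)) := by
    rw [← e1, e2, e3, e4]; field_simp
  have rhs : (2 * (k : ℝ) + 1) * (c / 2) ^ (ℓ + k) / ((ℓ - k).factorial : ℝ) *
      ((k.choose i : ℝ) / 2 ^ k) =
      ((k.choose i : ℝ) / 2 ^ i) *
        ((c / 2) ^ (ℓ + k) * ((2 * k + 1) / ((ℓ - k).factorial * 2 ^ (k - i)))) := by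
    rw [e5]; field_simp
  rw [lhs, rhs]
  have hc0 : 0 ≤ c / 2 := by linarith
  have f4 : 1 / ((ℓ - i).factorial : ℝ) ≤ (2 * k + 1) / ((ℓ - k).factorial * 2 ^ (k - i)) := by
    rw [div_le_div_iff₀ p2 (by positivity)]
    calc 1 * (((ℓ - k).factorial : ℝ) * 2 ^ (k - i))
        ≤ (ℓ - k).factorial * ((2 * k + 1) * (k - i).factorial) := by
          rw [one_mul]; gcongr
      _ = (2 * k + 1) * ((ℓ - k).factorial * (k - i).factorial) := by ring
      _ ≤ _ := by gcongr
  gcongr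

lemma aux_sum_choose (k ℓ : ℕ) (hkℓ : k ≤ ℓ) :
    ∑ i ∈ Finset.range (ℓ + 1), (k.choose i : ℝ) / 2 ^ k = 1 := by
  rw [← Finset.sum_div]
  have : ∑ i ∈ Finset.range (ℓ + 1), k.choose i = 2 ^ k := by
    rw [← Nat.sum_range_choose k]
    symm
    apply Finset.sum_subset
    · intro i; simp only [Finset.mem_range]; omega
    · intro i _ h
      apply Nat.choose_eq_zero_of_lt
      simp only [Finset.mem_range] at h; omega
  have h2 : ∑ i ∈ Finset.range (ℓ + 1), (k.choose i : ℝ) = 2 ^ k := by exact_mod_cast this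
  rw [h2]; exact div_self (by positivity)

lemma aux_deriv_bound (k ℓ : ℕ) (c ξ : ℝ) (hξ : |ξ| ≤ c) (x : ℝ) (hx : |x| ≤ 1) :
    ‖iteratedDeriv ℓ (fun x : ℝ => (x : ℂ) ^ k *
      Complex.exp (Complex.I * (ξ : ℂ) * (x : ℂ))) x‖ ≤
    ∑ i ∈ Finset.range (ℓ + 1), (ℓ.choose i : ℝ) * (k.descFactorial i : ℝ) * c ^ (ℓ - i) := by
  have hof : ContDiff ℝ ℓ (fun x : ℝ => (x : ℂ)) := Complex.ofRealCLM.contDiff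
  rw [iteratedDeriv_fun_mul (ContDiff.contDiffAt (by fun_prop))
    (ContDiff.contDiffAt (by fun_prop))]
  refine (norm_sum_le _ _).trans (Finset.sum_le_sum fun i _ => ?_)
  rw [aux_pow, aux_exp]
  have he : ‖Complex.exp (Complex.I * (ξ : ℂ) * (x : ℂ))‖ = 1 := by
    have := Complex.norm_exp_ofReal_mul_I (ξ * x)
    rw [← this]; congr 2; push_cast; ring
  simp only [norm_mul, norm_pow, he, Complex.norm_natCast, Complex.norm_real, Complex.norm_I,
    Real.norm_eq_abs, one_mul, mul_one]
  have h1 : |x| ^ (k - i) ≤ 1 := pow_le_one₀ (abs_nonneg _) hx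
  calc (ℓ.choose i : ℝ) * ((k.descFactorial i : ℝ) * |x| ^ (k - i)) * |ξ| ^ (ℓ - i)
      ≤ (ℓ.choose i : ℝ) * ((k.descFactorial i : ℝ) * 1) * c ^ (ℓ - i) := by gcongr
    _ = _ := by ring

/-- For `k ≤ ℓ`, `c ≥ 2` and `|ξ| ≤ c`,
`|∫_{-1}^{1} x^k P_ℓ(x) e^{iξx} dx| ≤ (4k+2) (c/2)^{ℓ+k} / Γ(ℓ-k+1)`. -/
theorem legendre_oscillatory_integral_bound (k ℓ : ℕ) (hkℓ : k ≤ ℓ)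
    (c : ℝ) (hc : 2 ≤ c) (ξ : ℝ) (hξ : |ξ| ≤ c) :
    ‖∫ x in (-1 : ℝ)..1,
        (x : ℂ) ^ k * (legendreP ℓ x : ℂ) * Complex.exp (Complex.I * (ξ : ℂ) * (x : ℂ))‖ ≤
      (4 * (k : ℝ) + 2) * (c / 2) ^ (ℓ + k) / Real.Gamma ((ℓ : ℝ) - (k : ℝ) + 1) := by
  have hG : Real.Gamma ((ℓ : ℝ) - (k : ℝ) + 1) = ((ℓ - k).factorial : ℝ) := by
    rw [← Nat.cast_sub hkℓ, Real.Gamma_nat_eq_factorial]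
  rw [hG]
  set A : ℝ := 1 / (2 ^ ℓ * (ℓ.factorial : ℝ)) with hA
  have hA0 : 0 ≤ A := by positivity
  set g : ℝ → ℂ := fun x : ℝ => (x : ℂ) ^ k * Complex.exp (Complex.I * (ξ : ℂ) * (x : ℂ)) with hg
  have hof : ContDiff ℝ ((⊤ : ℕ∞) : WithTop ℕ∞) (fun x : ℝ => (x : ℂ)) :=
    Complex.ofRealCLM.contDiff
  have hgs : ContDiff ℝ ((⊤ : ℕ∞) : WithTop ℕ∞) g := by
    rw [hg]; fun_prop
  set B : ℝ := ∑ i ∈ Finset.range (ℓ + 1),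
    (ℓ.choose i : ℝ) * (k.descFactorial i : ℝ) * c ^ (ℓ - i) with hB
  have hfun : (fun x : ℝ => (x : ℂ) ^ k * (legendreP ℓ x : ℂ) *
      Complex.exp (Complex.I * (ξ : ℂ) * (x : ℂ))) = fun x : ℝ => (A : ℂ) *
      (((((Polynomial.derivative^[ℓ])
        ((Polynomial.X ^ 2 - 1 : Polynomial ℝ) ^ ℓ)).eval x : ℝ) : ℂ) * g x) := by
    funext x
    have h := congrFun (aux_iter_poly ((Polynomial.X ^ 2 - 1 : Polynomial ℝ) ^ ℓ) ℓ) x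
    simp only [Polynomial.eval_pow, Polynomial.eval_sub, Polynomial.eval_X,
      Polynomial.eval_one] at h
    rw [legendreP, h, ← hA, hg]
    push_cast
    ring
  rw [hfun, intervalIntegral.integral_const_mul, norm_mul, aux_ibp ℓ ℓ le_rfl g hgs,
    Complex.norm_real, Real.norm_eq_abs, abs_of_nonneg hA0]
  have hint : ‖∫ x in (-1 : ℝ)..1, (((x ^ 2 - 1) ^ ℓ : ℝ) : ℂ) * iteratedDeriv ℓ g x‖ ≤
      B * |1 - (-1)| := by
    apply intervalIntegral.norm_integral_le_of_norm_le_const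
    intro x hx
    rw [Set.uIoc_of_le (by norm_num)] at hx
    have hx1 : |x| ≤ 1 := abs_le.mpr ⟨hx.1.le, hx.2⟩
    have h1 : |(x ^ 2 - 1) ^ ℓ| ≤ 1 := by
      rw [abs_pow]
      refine pow_le_one₀ (abs_nonneg _) (abs_le.mpr ⟨?_, ?_⟩)
      · nlinarith
      · nlinarith [hx.1, hx.2]
    rw [norm_mul, Complex.norm_real, Real.norm_eq_abs]
    calc _ ≤ 1 * ‖iteratedDeriv ℓ g x‖ := by gcongr
      _ ≤ B := by rw [one_mul]; exact aux_deriv_bound k ℓ c ξ hξ x hx1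
  have hsum : A * B ≤ (2 * (k : ℝ) + 1) * (c / 2) ^ (ℓ + k) / ((ℓ - k).factorial : ℝ) := by
    calc A * B ≤ ∑ i ∈ Finset.range (ℓ + 1),
        (2 * (k : ℝ) + 1) * (c / 2) ^ (ℓ + k) / ((ℓ - k).factorial : ℝ) *
          ((k.choose i : ℝ) / 2 ^ k) := by
          rw [hB, Finset.mul_sum]
          refine Finset.sum_le_sum fun i hi => ?_
          exact aux_term k ℓ i hkℓ (by simp only [Finset.mem_range] at hi; omega) c hc
      _ = _ := by rw [← Finset.mul_sum, aux_sum_choose k ℓ hkℓ, mul_one]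
  calc _ ≤ A * (B * |1 - (-1)|) := by gcongr
    _ = 2 * (A * B) := by norm_num; ring
    _ ≤ 2 * ((2 * (k : ℝ) + 1) * (c / 2) ^ (ℓ + k) / ((ℓ - k).factorial : ℝ)) := by gcongr
    _ = _ := by ring
end
end

section
/- Let m ≥ n ≥ 1, let A, E be complex m×n matrices, let b, e ∈ ℂ^m, and let x ∈ ℂ^n satisfy A x = b. Let ε > 0 and suppose ‖E‖₂ < ε/2, where ‖·‖₂ denotes the operator norm induced by the Euclidean norms. Suppose A + E = Σ_{i=1}^{n} σ̂_i u_i v_i*, where u_1,…,u_n ∈ ℂ^m are orthonormal, v_1,…,v_n form an orthonormal basis of ℂ^n, and σ̂_1 ≥ σ̂_2 ≥ … ≥ σ̂_n ≥ 0 (set σ̂_{n+1} = 0). Let 1 ≤ k ≤ n satisfy σ̂_k ≥ ε ≥ σ̂_{k+1}, and define x̂_k = Σ_{i=1}^{k} σ̂_i^{−1} (u_i* (b + e)) v_i. Then ‖x̂_k‖₂ ≤ (1/σ̂_k)(2ε‖x‖₂ + ‖e‖₂) + ‖x‖₂, and ‖A x̂_k − b‖₂ ≤ 5ε‖x‖₂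 + (3/2)‖e‖₂. -/
open scoped InnerProductSpace

noncomputable section

lemma svd_sum_bound {ι F G : Type*} [NormedAddCommGroup F] [InnerProductSpace ℂ F]
    [NormedAddCommGroup G] [InnerProductSpace ℂ G]
    (w : ι → F) (hw : Orthonormal ℂ w) (v : ι → G) (hv : Orthonormal ℂ v)
    (s : Finset ι) (c : ι → ℂ) (C : ℝ) (hC : 0 ≤ C) (hc : ∀ i ∈ s, ‖c i‖ ≤ C) (z : F) :
    ‖∑ i ∈ s, (c i * ⟪w i, z⟫_ℂ) • v i‖ ≤ C * ‖z‖ := by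
  have h1 : ‖∑ i ∈ s, (c i * ⟪w i, z⟫_ℂ) • v i‖ ^ 2 = ∑ i ∈ s, ‖c i * ⟪w i, z⟫_ℂ‖ ^ 2 := by
    have h := hv.inner_sum (fun i => c i * ⟪w i, z⟫_ℂ) (fun i => c i * ⟪w i, z⟫_ℂ) s
    rw [inner_self_eq_norm_sq_to_K] at h
    have h' : ∀ i, (starRingEnd ℂ) (c i * ⟪w i, z⟫_ℂ) * (c i * ⟪w i, z⟫_ℂ)
        = ((‖c i * ⟪w i, z⟫_ℂ‖ ^ 2 : ℝ) : ℂ) := by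
      intro i
      rw [RCLike.conj_mul]; norm_cast
    simp only [h'] at h
    apply Complex.ofReal_injective
    push_cast at h ⊢
    exact h
  have h2 : ∑ i ∈ s, ‖c i * ⟪w i, z⟫_ℂ‖ ^ 2 ≤ (C * ‖z‖) ^ 2 := by
    calc _ ≤ ∑ i ∈ s, C ^ 2 * ‖⟪w i, z⟫_ℂ‖ ^ 2 := by
          apply Finset.sum_le_sum
          intro i hi
          rw [norm_mul, mul_pow]
          gcongr
          exact hc i hi
      _ = C ^ 2 * ∑ i ∈ s, ‖⟪w i, z⟫_ℂ‖ ^ 2 := by rw [Finset.mul_sum]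
      _ ≤ C ^ 2 * ‖z‖ ^ 2 := by
          gcongr
          exact hw.sum_inner_products_le z
      _ = _ := by ring
  rw [← h1] at h2
  exact (sq_le_sq₀ (norm_nonneg _) (by positivity)).1 h2

/-- Error bounds for solutions of linear systems computed via a
truncated singular value decomposition. The matrices `A`, `E` are encoded as linear maps
`ℂⁿ → ℂᵐ` (with the Euclidean norms), and `A + E = ∑ σ̂ᵢ uᵢ vᵢ*` is an SVD of `A + E`
with descending singular values; `σ̂_k ≥ ε ≥ σ̂_{k+1}` is encoded (0-indexed, using the
monotonicity) as `ε ≤ σ̂ᵢ` for `i < k` and `σ̂ᵢ ≤ ε` for `k ≤ i`. -/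
theorem truncated_svd_bounds (m n : ℕ) (hn : 1 ≤ n) (hmn : n ≤ m)
    (A E : EuclideanSpace ℂ (Fin n) →L[ℂ] EuclideanSpace ℂ (Fin m))
    (b e : EuclideanSpace ℂ (Fin m)) (x : EuclideanSpace ℂ (Fin n))
    (hAx : A x = b) (ε : ℝ) (hε : 0 < ε) (hE : ‖E‖ < ε / 2)
    (u : Fin n → EuclideanSpace ℂ (Fin m)) (hu : Orthonormal ℂ u)
    (v : Fin n → EuclideanSpace ℂ (Fin n)) (hv : Orthonormal ℂ v)
    (σ : Fin n → ℝ) (hσ0 : ∀ i, 0 ≤ σ i)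
    (hσmono : ∀ i j : Fin n, i ≤ j → σ j ≤ σ i)
    (hSVD : ∀ z : EuclideanSpace ℂ (Fin n),
      (A + E) z = ∑ i : Fin n, (((σ i : ℂ)) * ⟪v i, z⟫_ℂ) • u i)
    (k : ℕ) (hk1 : 1 ≤ k) (hkn : k ≤ n)
    (hgeq : ∀ i : Fin n, (i : ℕ) < k → ε ≤ σ i)
    (hleq : ∀ i : Fin n, k ≤ (i : ℕ) → σ i ≤ ε) :
    ‖∑ i ∈ Finset.univ.filter (fun i : Fin n => (i : ℕ) < k),
        (((σ i : ℂ))⁻¹ * ⟪u i, b + e⟫_ℂ) • v i‖ ≤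
      (σ ⟨k - 1, by omega⟩)⁻¹ * (2 * ε * ‖x‖ + ‖e‖) + ‖x‖ ∧
    ‖A (∑ i ∈ Finset.univ.filter (fun i : Fin n => (i : ℕ) < k),
        (((σ i : ℂ))⁻¹ * ⟪u i, b + e⟫_ℂ) • v i) - b‖ ≤
      5 * ε * ‖x‖ + (3 / 2) * ‖e‖ := by
  set s := Finset.univ.filter (fun i : Fin n => (i : ℕ) < k) with hs
  set t := Finset.univ.filter (fun i : Fin n => ¬ (i : ℕ) < k) with ht
  set xh := ∑ i ∈ s, (((σ i : ℂ))⁻¹ * ⟪u i, b + e⟫_ℂ) • v i with hxh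
  set τ := σ ⟨k - 1, by omega⟩ with hτ
  have hετ : ε ≤ τ := hgeq _ (by simp; omega)
  have hτpos : 0 < τ := hε.trans_le hετ
  have hsσ : ∀ i ∈ s, τ ≤ σ i := by
    intro i hi
    have hi' : (i : ℕ) < k := by simpa [hs] using hi
    exact hσmono _ _ (by rw [Fin.le_def]; simp; omega)
  have hsne : ∀ i ∈ s, (σ i : ℂ) ≠ 0 := by
    intro i hi
    have := hsσ i hi
    exact_mod_cast (hτpos.trans_le this).ne'
  obtain ⟨f, hf⟩ : ∃ f, f = e - E x := ⟨_, rfl⟩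
  have hEb : ∀ z, ‖E z‖ ≤ ε / 2 * ‖z‖ := fun z =>
    (E.le_opNorm z).trans (by gcongr)
  have hfn : ‖f‖ ≤ ‖e‖ + ε / 2 * ‖x‖ := by
    rw [hf]; exact (norm_sub_le _ _).trans (by gcongr; exact hEb x)
  have hbe : b + e = (A + E) x + f := by
    rw [hf, ← hAx, ContinuousLinearMap.add_apply]; abel
  have hin : ∀ i, ⟪u i, b + e⟫_ℂ = σ i * ⟪v i, x⟫_ℂ + ⟪u i, f⟫_ℂ := by
    intro i
    rw [hbe, inner_add_right, hSVD, hu.inner_right_fintype]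
  have hx1 : xh = ∑ i ∈ s, ((1 : ℂ) * ⟪v i, x⟫_ℂ) • v i
      + ∑ i ∈ s, (((σ i : ℂ))⁻¹ * ⟪u i, f⟫_ℂ) • v i := by
    rw [hxh, ← Finset.sum_add_distrib]
    apply Finset.sum_congr rfl
    intro i hi
    rw [hin, ← add_smul, mul_add, inv_mul_cancel_left₀ (hsne i hi), one_mul]
  have hxn : ‖xh‖ ≤ ‖x‖ + τ⁻¹ * ‖f‖ := by
    rw [hx1]
    refine (norm_add_le _ _).trans (add_le_add ?_ ?_)
    · have := svd_sum_bound v hv v hv s (fun _ => 1) 1 zero_le_one (by simp) x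
      simpa using this
    · refine svd_sum_bound u hu v hv s (fun i => ((σ i : ℂ))⁻¹) τ⁻¹ (by positivity) ?_ f
      intro i hi
      rw [norm_inv, Complex.norm_real, Real.norm_of_nonneg (hσ0 i)]
      exact inv_anti₀ hτpos (hsσ i hi)
  have hx0 := norm_nonneg x
  have he0 := norm_nonneg e
  constructor
  · have : τ⁻¹ * ‖f‖ ≤ τ⁻¹ * (2 * ε * ‖x‖ + ‖e‖) := by
      gcongr
      nlinarith [mul_nonneg hε.le hx0]
    linarith
  · have hAxh : (A + E) xh = ∑ i ∈ s, ((σ i : ℂ) * ⟪v i, x⟫_ℂ) • u i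
        + ∑ i ∈ s, ((1 : ℂ) * ⟪u i, f⟫_ℂ) • u i := by
      have hvx : ∀ i, ⟪v i, xh⟫_ℂ = if i ∈ s then ((σ i : ℂ))⁻¹ * ⟪u i, b + e⟫_ℂ else 0 := by
        intro i
        rw [hxh, inner_sum]
        simp only [inner_smul_right, orthonormal_iff_ite.1 hv, mul_ite, mul_one, mul_zero]
        rw [Finset.sum_ite_eq]
      rw [hSVD, ← Finset.sum_add_distrib, ← Finset.sum_subset (Finset.subset_univ s)]
      · apply Finset.sum_congr rfl
        intro i hi
        rw [hvx, if_pos hi, mul_inv_cancel_left₀ (hsne i hi), hin, ← add_smul, one_mul]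
      · intro i _ hi
        rw [hvx, if_neg hi]; simp
    have hsplit : (A + E) x = ∑ i ∈ s, ((σ i : ℂ) * ⟪v i, x⟫_ℂ) • u i
        + ∑ i ∈ t, ((σ i : ℂ) * ⟪v i, x⟫_ℂ) • u i := by
      rw [hSVD, hs, ht, Finset.sum_filter_add_sum_filter_not]
    have hmain : A xh - b = ∑ i ∈ s, ((1 : ℂ) * ⟪u i, f⟫_ℂ) • u i
        - ∑ i ∈ t, ((σ i : ℂ) * ⟪v i, x⟫_ℂ) • u i + E x - E xh := by
      have h1 : A xh = (A + E) xh - E xh := by rw [ContinuousLinearMap.add_apply]; abel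
      have h2 : b = (A + E) x - E x := by rw [ContinuousLinearMap.add_apply, hAx]; abel
      rw [h1, hAxh, h2, hsplit]; abel
    have b1 : ‖∑ i ∈ s, ((1 : ℂ) * ⟪u i, f⟫_ℂ) • u i‖ ≤ 1 * ‖f‖ :=
      svd_sum_bound u hu u hu s (fun _ => 1) 1 zero_le_one (by simp) f
    have b2 : ‖∑ i ∈ t, ((σ i : ℂ) * ⟪v i, x⟫_ℂ) • u i‖ ≤ ε * ‖x‖ := by
      refine svd_sum_bound v hv u hu t (fun i => (σ i : ℂ)) ε hε.le ?_ x
      intro i hi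
      rw [Complex.norm_real, Real.norm_of_nonneg (hσ0 i)]
      exact hleq i (by simpa [ht] using hi)
    have b3 := hEb x
    have b4 := hEb xh
    have b5 : ε / 2 * ‖xh‖ ≤ ε / 2 * ‖x‖ + 1 / 2 * ‖f‖ := by
      have h1 : ε * τ⁻¹ ≤ 1 := by
        rw [← div_eq_mul_inv]; exact (div_le_one hτpos).2 hετ
      have h2 : ε / 2 * ‖xh‖ ≤ ε / 2 * (‖x‖ + τ⁻¹ * ‖f‖) := by gcongr
      nlinarith [mul_le_mul_of_nonneg_right h1 (norm_nonneg f)]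
    have b6 : ‖A xh - b‖ ≤ ‖∑ i ∈ s, ((1 : ℂ) * ⟪u i, f⟫_ℂ) • u i‖
        + ‖∑ i ∈ t, ((σ i : ℂ) * ⟪v i, x⟫_ℂ) • u i‖ + ‖E x‖ + ‖E xh‖ := by
      rw [hmain]
      refine (norm_sub_le _ _).trans (add_le_add ?_ le_rfl)
      refine (norm_add_le _ _).trans (add_le_add ?_ le_rfl)
      exact norm_sub_le _ _
    nlinarith [mul_nonneg hε.le hx0]
end
end

section
/- Suppose f : [−1,1]² → ℂ and g : [−1,1]² → ℝ admit infinitely differentiable extensions to an open neighborhood of [−1,1]², and that G₁ := max_{[−1,1]²} |∂g/∂x| < 1/2, with ∂g/∂x not identically zero. Let 0 < ε < 1 and set n = ⌊log(ε)/log(2G₁)⌋. Then there exists a smooth function p_b : ℝ² → ℂ of at most polynomial growth (defining a tempered distribution) such that: (1) the Fourier transform of p_b is a tempered distribution of order at most 1 supported in [−c_f(ε) − n·c_{g_x}(ε), c_f(ε) + n·c_{g_x}(ε)]²; (2) |∂p_b/∂x(x,y) + i (∂g/∂x)(x,y) p_b(x,y) − f(x,y)| ≤ 3ε (1 + G₁/(1−2G₁))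 sup_{[−1,1]²} |f| for all (x,y) ∈ [−1,1]²; (3) sup_{[−1,1]²} |p_b| ≤ (2/(1−2G₁)) sup_{[−1,1]²} |f|; and (4) sup_{[−1,1]²} |∂p_b/∂x| ≤ 4 (1 + G₁/(1−2G₁)) sup_{[−1,1]²} |f|. -/
open MeasureTheory Real

noncomputable section

/-- The partial derivative `∂/∂x` of a complex-valued function on `ℝ²`. -/
def pd1 (f : ℝ × ℝ → ℂ) : ℝ × ℝ → ℂ := fun z => fderiv ℝ f z (1, 0)

/-- The partial derivative `∂/∂y` of a complex-valued function on `ℝ²`. -/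
def pd2 (f : ℝ × ℝ → ℂ) : ℝ × ℝ → ℂ := fun z => fderiv ℝ f z (0, 1)

/-- The multi-index partial derivative `D^α = ∂_x^{α₁} ∂_y^{α₂}` on `ℝ²`. -/
def mderiv2 (α : ℕ × ℕ) (f : ℝ × ℝ → ℂ) : ℝ × ℝ → ℂ := pd1^[α.1] (pd2^[α.2] f)

/-- The Fourier transform on `ℝ²` with the paper's normalization:
`f̂(ξ) = (1/(4π²)) ∫∫ f(x) e^{-i ξ·x} dx`. -/
def paperFT (f : ℝ × ℝ → ℂ) (ξ : ℝ × ℝ) : ℂ :=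
  (1 / (4 * (π : ℂ) ^ 2)) *
    ∫ x : ℝ × ℝ, f x * Complex.exp (-Complex.I * ((ξ.1 * x.1 + ξ.2 * x.2 : ℝ) : ℂ))

/-- The sup of `‖f‖` over a subset `S` of `ℝ²`. -/
def supOn (f : ℝ × ℝ → ℂ) (S : Set (ℝ × ℝ)) : ℝ := ⨆ z : S, ‖f (z : ℝ × ℝ)‖

/-- The square `[-c,c]²` in `ℝ²`. -/
def sqIcc (c : ℝ) : Set (ℝ × ℝ) := Set.Icc ((-c, -c) : ℝ × ℝ) ((c, c) : ℝ × ℝ)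

/-- `fb` is an `ε`-bandlimited approximation of `f` (defined on `Ω`) with bandlimit `c`. -/
def IsBandlimitedApprox (Ω : Set (ℝ × ℝ)) (f : ℝ × ℝ → ℂ) (ε c : ℝ)
    (fb : SchwartzMap (ℝ × ℝ) ℂ) : Prop :=
  (∀ ξ : ℝ × ℝ, ξ ∉ sqIcc c → paperFT (⇑fb) ξ = 0) ∧
  (∀ z ∈ Ω, ‖fb z - f z‖ ≤ ε * supOn f Ω) ∧
  (∀ z : ℝ × ℝ, ‖fb z‖ ≤ 3 * supOn f Ω) ∧
  (∀ α : ℕ × ℕ, α.1 + α.2 ≤ 2 → ∀ ξ : ℝ × ℝ,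
    ‖mderiv2 α (paperFT ⇑fb) ξ‖ ≤ 10 * supOn f Ω)

/-- `c_f(ε)`: the infimum of the bandlimits of `ε`-bandlimited approximations of `f`. -/
def bandlimitConst (Ω : Set (ℝ × ℝ)) (f : ℝ × ℝ → ℂ) (ε : ℝ) : ℝ :=
  sInf {c : ℝ | 0 < c ∧ ∃ fb : SchwartzMap (ℝ × ℝ) ℂ, IsBandlimitedApprox Ω f ε c fb}

/-- `p` has at most polynomial growth. -/
def PolyGrowth (p : ℝ × ℝ → ℂ) : Prop :=
  ∃ (C : ℝ) (k : ℕ), ∀ z : ℝ × ℝ, ‖p z‖ ≤ C * (1 + ‖z‖) ^ k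

/-- The Fourier transform of (the tempered distribution induced by) a function `p` of
polynomial growth, as a functional on Schwartz space: `⟨p̂, ψ⟩ = ⟨p, ψ̂⟩`. -/
def ftFunctional (p : ℝ × ℝ → ℂ) : SchwartzMap (ℝ × ℝ) ℂ → ℂ :=
  fun ψ => ∫ x : ℝ × ℝ, p x * paperFT (⇑ψ) x

/-- The support of a functional on Schwartz space (e.g. a tempered distribution). -/
def funcSupport (F : SchwartzMap (ℝ × ℝ) ℂ → ℂ) : Set (ℝ × ℝ) :=
  (⋃₀ {U : Set (ℝ × ℝ) |
    IsOpen U ∧ ∀ ψ : SchwartzMap (ℝ × ℝ) ℂ, tsupport ⇑ψ ⊆ U → F ψ = 0})ᶜ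

/-- A functional on Schwartz space has order at most `m` if for every compact `K` there
is a constant `M` so that `‖F ψ‖ ≤ M · sup_{|α| ≤ m} sup_{x ∈ K} ‖D^α ψ(x)‖` for every
Schwartz `ψ` supported in `K` (phrased via arbitrary upper bounds `B` for that sup). -/
def funcOrderAtMost (F : SchwartzMap (ℝ × ℝ) ℂ → ℂ) (m : ℕ) : Prop :=
  ∀ K : Set (ℝ × ℝ), IsCompact K → ∃ M : ℝ,
    ∀ ψ : SchwartzMap (ℝ × ℝ) ℂ, tsupport ⇑ψ ⊆ K →
      ∀ B : ℝ, 0 ≤ B →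
        (∀ α : ℕ × ℕ, α.1 + α.2 ≤ m → ∀ x ∈ K, ‖mderiv2 α (⇑ψ) x‖ ≤ B) →
        ‖F ψ‖ ≤ M * B

/-- The unit square `[-1,1]²`. -/
def unitSq : Set (ℝ × ℝ) := Set.Icc ((-1, -1) : ℝ × ℝ) ((1, 1) : ℝ × ℝ)

open scoped SchwartzMap FourierTransform

/-- Synthesis operator. -/
def synth (φ : ℝ × ℝ → ℂ) (x : ℝ × ℝ) : ℂ :=
  ∫ ξ : ℝ × ℝ, φ ξ * Complex.exp (Complex.I * ((ξ.1 * x.1 + ξ.2 * x.2 : ℝ) : ℂ))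

abbrev E2 := WithLp 2 (ℝ × ℝ)

def eE : E2 ≃L[ℝ] ℝ × ℝ := WithLp.prodContinuousLinearEquiv 2 ℝ ℝ ℝ

lemma integral_E2 (F : ℝ × ℝ → ℂ) : ∫ v : E2, F (eE v) = ∫ x, F x := by
  have h := WithLp.volume_preserving_ofLp ℝ ℝ
  exact h.integral_comp (WithLp.homeomorphProd 2 ℝ ℝ).measurableEmbedding F

lemma inner_E2 (v w : E2) : inner ℝ v w = (eE v).1 * (eE w).1 + (eE v).2 * (eE w).2 := by
  rw [WithLp.prod_inner_apply]
  simp [eE, mul_comm]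

lemma paperFT_eE (A : 𝓢(E2, ℂ)) (ξ : ℝ × ℝ) :
    paperFT (fun x => A (eE.symm x)) ξ
      = (1 / (4 * (π : ℂ) ^ 2)) * (𝓕 A) ((1 / (2 * π)) • eE.symm ξ) := by
  rw [SchwartzMap.fourier_coe, Real.fourier_eq', paperFT, ← integral_E2]
  congr 1
  congr 1
  ext v
  rw [inner_E2]
  simp only [ContinuousLinearEquiv.symm_apply_apply, smul_eq_mul, map_smul,
    ContinuousLinearEquiv.apply_symm_apply, Prod.smul_fst, Prod.smul_snd]
  rw [mul_comm]
  congr 2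
  have : (π : ℂ) ≠ 0 := by exact_mod_cast Real.pi_ne_zero
  push_cast
  field_simp

lemma synth_eE (B : 𝓢(E2, ℂ)) (x : ℝ × ℝ) :
    synth (fun ξ => (1 / (4 * (π : ℂ) ^ 2)) * B ((1 / (2 * π)) • eE.symm ξ)) x
      = (𝓕⁻ B) (eE.symm x) := by
  rw [SchwartzMap.fourierInv_coe, Real.fourierInv_eq', synth, ← integral_E2]
  have h := Measure.integral_comp_smul (volume : Measure E2)
    (fun v : E2 => Complex.exp (((2 * π * inner ℝ v (eE.symm x) : ℝ) : ℂ) * Complex.I) • B v)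
    (1 / (2 * π))
  have hd : Module.finrank ℝ E2 = 2 := by
    rw [(WithLp.linearEquiv 2 ℝ (ℝ × ℝ)).finrank_eq]; simp
  rw [hd] at h
  have hpi := Real.pi_pos
  have h1 : |(((1 / (2 * π)) ^ 2)⁻¹ : ℝ)| = 4 * π ^ 2 := by
    rw [abs_of_pos (by positivity)]; field_simp; norm_num
  rw [h1] at h
  have hp : (π : ℂ) ≠ 0 := by exact_mod_cast Real.pi_ne_zero
  have h2 : (∫ v : E2, Complex.exp (((2 * π * inner ℝ v (eE.symm x) : ℝ) : ℂ) * Complex.I) • B v)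
      = (1 / (4 * (π : ℂ) ^ 2)) * ((4 * π ^ 2) • ∫ v : E2,
          Complex.exp (((2 * π * inner ℝ v (eE.symm x) : ℝ) : ℂ) * Complex.I) • B v) := by
    rw [Complex.real_smul]
    generalize (∫ v : E2, Complex.exp (((2 * π * inner ℝ v (eE.symm x) : ℝ) : ℂ) * Complex.I) • B v) = Q
    push_cast; field_simp
  rw [h2, ← h, ← integral_const_mul]
  congr 1
  ext v
  rw [inner_E2]
  simp only [ContinuousLinearEquiv.symm_apply_apply, smul_eq_mul, map_smul,
    ContinuousLinearEquiv.apply_symm_apply, Prod.smul_fst, Prod.smul_snd]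
  rw [mul_assoc]
  congr 1
  rw [mul_comm]
  congr 2
  push_cast
  field_simp

def scE : (ℝ × ℝ) ≃L[ℝ] E2 :=
  eE.symm.trans (ContinuousLinearEquiv.smulLeft (Units.mk0 (1 / (2 * π)) (by have := Real.pi_pos; positivity)))

lemma scE_apply (ξ : ℝ × ℝ) : scE ξ = (1 / (2 * π)) • eE.symm ξ := rfl

lemma FT1 (ψ : 𝓢(ℝ × ℝ, ℂ)) : ∃ Ψ : 𝓢(ℝ × ℝ, ℂ), (⇑Ψ = paperFT ψ) ∧ ∀ x, ψ x = synth Ψ x := by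
  let A : 𝓢(E2, ℂ) := SchwartzMap.compCLMOfContinuousLinearEquiv ℂ eE ψ
  have hA : (fun x => A (eE.symm x)) = ψ := by ext x; simp [A]
  let Ψ : 𝓢(ℝ × ℝ, ℂ) := (1 / (4 * (π : ℂ) ^ 2)) • SchwartzMap.compCLMOfContinuousLinearEquiv ℂ scE (𝓕 A)
  have hΨ : (Ψ : ℝ × ℝ → ℂ) = fun ξ => (1 / (4 * (π : ℂ) ^ 2)) * (𝓕 A) ((1 / (2 * π)) • eE.symm ξ) := by
    ext ξ; simp [Ψ, scE_apply]
  refine ⟨Ψ, ?_, fun x => ?_⟩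
  · ext ξ; rw [← hA, paperFT_eE, hΨ]
  · rw [hΨ, synth_eE, FourierTransform.fourierInv_fourier_eq]; simp [A]

lemma FT2 (Ψ : 𝓢(ℝ × ℝ, ℂ)) : ∃ ψ : 𝓢(ℝ × ℝ, ℂ), (⇑Ψ = paperFT ψ) ∧ ∀ x, ψ x = synth Ψ x := by
  let B : 𝓢(E2, ℂ) := (4 * (π : ℂ) ^ 2) • SchwartzMap.compCLMOfContinuousLinearEquiv ℂ scE.symm Ψ
  let A : 𝓢(E2, ℂ) := 𝓕⁻ B
  let ψ : 𝓢(ℝ × ℝ, ℂ) := SchwartzMap.compCLMOfContinuousLinearEquiv ℂ eE.symm A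
  have hψ : (ψ : ℝ × ℝ → ℂ) = fun x => A (eE.symm x) := by ext x; simp [ψ]
  have hp : (π : ℂ) ≠ 0 := by exact_mod_cast Real.pi_ne_zero
  have hΨ : (Ψ : ℝ × ℝ → ℂ) = fun ξ => (1 / (4 * (π : ℂ) ^ 2)) * B ((1 / (2 * π)) • eE.symm ξ) := by
    ext ξ; rw [← scE_apply]; simp [B]; field_simp
  refine ⟨ψ, ?_, fun x => ?_⟩
  · ext ξ; rw [hψ, paperFT_eE, hΨ, FourierTransform.fourier_fourierInv_eq]
  · rw [hΨ, synth_eE]; simp [ψ, A]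
/-- Frequency densities supported in a square. -/
structure Band (c : ℝ) (φ : ℝ × ℝ → ℂ) : Prop where
  meas : Measurable φ
  int : Integrable φ
  supp : ∀ ξ, ξ ∉ sqIcc c → φ ξ = 0

def Jop (W : ℝ × ℝ → ℂ) (x : ℝ × ℝ) : ℂ := ∫ t in (0:ℝ)..x.1, W (t, x.2)

def ker (ξ x : ℝ × ℝ) : ℂ :=
  (Complex.exp (Complex.I * ((ξ.1 * x.1 + ξ.2 * x.2 : ℝ) : ℂ))
    - Complex.exp (Complex.I * ((ξ.2 * x.2 : ℝ) : ℂ))) / (Complex.I * (ξ.1 : ℂ))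

lemma norm_cexp_I (r : ℝ) : ‖Complex.exp (Complex.I * (r : ℂ))‖ = 1 := by
  rw [mul_comm]; exact Complex.norm_exp_ofReal_mul_I r

lemma ker_eq (ξ x : ℝ × ℝ) (h : ξ.1 ≠ 0) :
    ∫ t in (0:ℝ)..x.1, Complex.exp (Complex.I * ((ξ.1 * t + ξ.2 * x.2 : ℝ) : ℂ)) = ker ξ x := by
  have h' : (ξ.1 : ℂ) ≠ 0 := by exact_mod_cast h
  have hI : Complex.I * (ξ.1 : ℂ) ≠ 0 := mul_ne_zero Complex.I_ne_zero h'
  have hd : ∀ t ∈ Set.uIcc (0:ℝ) x.1, HasDerivAt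
      (fun t : ℝ => Complex.exp (Complex.I * ((ξ.1 * t + ξ.2 * x.2 : ℝ) : ℂ)) / (Complex.I * (ξ.1 : ℂ)))
      (Complex.exp (Complex.I * ((ξ.1 * t + ξ.2 * x.2 : ℝ) : ℂ))) t := by
    intro t _
    have h1 : HasDerivAt (fun t : ℝ => ξ.1 * t + ξ.2 * x.2) ξ.1 t := by
      simpa using ((hasDerivAt_id t).const_mul ξ.1).add_const (ξ.2 * x.2)
    have h2 := ((h1.ofReal_comp.const_mul Complex.I).cexp).div_const (Complex.I * (ξ.1 : ℂ))
    rwa [mul_div_cancel_right₀ _ hI] at h2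
  rw [intervalIntegral.integral_eq_sub_of_hasDerivAt hd]
  · simp only [ker]; rw [← sub_div]; simp
  · apply Continuous.intervalIntegrable; fun_prop

lemma norm_ker_le (ξ x : ℝ × ℝ) : ‖ker ξ x‖ ≤ |x.1| := by
  by_cases h : ξ.1 = 0
  · simp [ker, h]
  · rw [← ker_eq ξ x h]
    refine (intervalIntegral.norm_integral_le_of_norm_le_const (C := 1) ?_).trans (by simp)
    intro t _; rw [norm_cexp_I]

lemma measurable_ker : Measurable (fun p : (ℝ × ℝ) × (ℝ × ℝ) => ker p.1 p.2) := by
  unfold ker; fun_prop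

lemma ae_fst_ne : ∀ᵐ ξ : ℝ × ℝ, ξ.1 ≠ 0 := by
  have : ∀ᵐ t : ℝ, t ≠ 0 := by
    simp [ae_iff]
  exact Measure.quasiMeasurePreserving_fst.ae this

lemma synth_integrable {φ : ℝ × ℝ → ℂ} (h : Integrable φ) (x : ℝ × ℝ) :
    Integrable (fun ξ : ℝ × ℝ => φ ξ * Complex.exp (Complex.I * ((ξ.1 * x.1 + ξ.2 * x.2 : ℝ) : ℂ))) := by
  refine h.mul_bdd (c := 1) ?_ ?_
  · apply Continuous.aestronglyMeasurable; fun_prop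
  · filter_upwards with ξ; rw [norm_cexp_I]

instance finite_uIoc (a b : ℝ) : IsFiniteMeasure (volume.restrict (Set.uIoc a b)) :=
  inferInstanceAs (IsFiniteMeasure (volume.restrict (Set.Ioc (min a b) (max a b))))

lemma Jop_synth {φ : ℝ × ℝ → ℂ} (h : Integrable φ) (x : ℝ × ℝ) :
    Jop (synth φ) x = ∫ ξ, φ ξ * ker ξ x := by
  unfold Jop synth
  have h_int : Integrable (Function.uncurry fun (t : ℝ) (ξ : ℝ × ℝ) => φ ξ * Complex.exp (Complex.I * ((ξ.1 * t + ξ.2 * x.2 : ℝ) : ℂ))) ((volume.restrict (Set.uIoc 0 x.1)).prod volume) := by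
    have : Integrable (fun p : ℝ × (ℝ × ℝ) => φ p.2) ((volume.restrict (Set.uIoc 0 x.1)).prod volume) := h.comp_snd _
    refine this.mul_bdd (c := 1) ?_ ?_
    · apply Continuous.aestronglyMeasurable; fun_prop
    · filter_upwards with ξ; rw [norm_cexp_I]
  rw [intervalIntegral_integral_swap h_int]
  apply integral_congr_ae
  filter_upwards [ae_fst_ne] with ξ hξ
  rw [intervalIntegral.integral_const_mul, ker_eq ξ x hξ]

lemma norm_Jop_synth_le {φ : ℝ × ℝ → ℂ} (h : Integrable φ) (x : ℝ × ℝ) :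
    ‖Jop (synth φ) x‖ ≤ (∫ ξ, ‖φ ξ‖) * |x.1| := by
  rw [Jop_synth h, ← integral_mul_const]
  refine norm_integral_le_of_norm_le (h.norm.mul_const _) ?_
  filter_upwards with ξ
  rw [norm_mul]
  exact mul_le_mul_of_nonneg_left (norm_ker_le ξ x) (norm_nonneg _)

def Lneg : (ℝ × ℝ) →L[ℝ] (ℝ × ℝ) →L[ℝ] ℝ :=
  (-(1 / (2 * π))) • ((ContinuousLinearMap.mul ℝ ℝ).bilinearComp
      (ContinuousLinearMap.fst ℝ ℝ ℝ) (ContinuousLinearMap.fst ℝ ℝ ℝ)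
    + (ContinuousLinearMap.mul ℝ ℝ).bilinearComp
      (ContinuousLinearMap.snd ℝ ℝ ℝ) (ContinuousLinearMap.snd ℝ ℝ ℝ))

lemma Lneg_apply (v w : ℝ × ℝ) : Lneg v w = (-(1 / (2 * π))) * (v.1 * w.1 + v.2 * w.2) := rfl

lemma char_scale (r : ℝ) : ((𝐞 (-((-(1 / (2 * π))) * r)) : Circle) : ℂ) = Complex.exp (Complex.I * (r : ℂ)) := by
  rw [Real.fourierChar_apply]
  congr 1
  have : (π : ℂ) ≠ 0 := by exact_mod_cast Real.pi_ne_zero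
  push_cast
  field_simp

lemma norm_le_of_mem {c : ℝ} {ξ : ℝ × ℝ} (h : ξ ∈ sqIcc c) : ‖ξ‖ ≤ c := by
  obtain ⟨⟨h1, h2⟩, h3, h4⟩ := h
  simp only [Prod.norm_def, sup_le_iff, Real.norm_eq_abs, abs_le]
  exact ⟨⟨h1, h3⟩, h2, h4⟩

lemma mem_sqIcc {c : ℝ} {ξ : ℝ × ℝ} : ξ ∈ sqIcc c ↔ |ξ.1| ≤ c ∧ |ξ.2| ≤ c := by
  simp only [sqIcc, Set.mem_Icc, Prod.le_def, abs_le]; tauto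

lemma Band.pow_int {c : ℝ} {φ : ℝ × ℝ → ℂ} (h : Band c φ) (n : ℕ) :
    Integrable (fun v : ℝ × ℝ => ‖v‖ ^ n * ‖φ v‖) := by
  refine (h.int.norm.const_mul (|c| ^ n)).mono' ?_ ?_
  · exact ((continuous_norm.pow n).aestronglyMeasurable).mul h.int.norm.aestronglyMeasurable
  · filter_upwards with v
    by_cases hv : v ∈ sqIcc c
    · rw [Real.norm_of_nonneg (by positivity)]
      have := (norm_le_of_mem hv).trans (le_abs_self c)
      gcongr
    · simp [h.supp v hv]

lemma contDiff_synth {c : ℝ} {φ : ℝ × ℝ → ℂ} (h : Band c φ) : ContDiff ℝ (⊤ : ℕ∞) (synth φ) := by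
  have := VectorFourier.contDiff_fourierIntegral (N := (⊤ : ℕ∞)) Lneg (μ := volume) (f := φ) (fun n _ => h.pow_int n)
  suffices hs : synth φ = VectorFourier.fourierIntegral 𝐞 volume Lneg.toLinearMap₁₂ φ by
    rw [hs]; exact this
  ext x
  unfold synth VectorFourier.fourierIntegral
  congr 1
  ext ξ
  change _ = ((𝐞 (-((-(1 / (2 * π))) * (ξ.1 * x.1 + ξ.2 * x.2))) : Circle) : ℂ) • φ ξ
  rw [char_scale, smul_eq_mul, mul_comm]

def Ltri : (ℝ × (ℝ × ℝ)) →L[ℝ] (ℝ × ℝ) →L[ℝ] ℝ :=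
  (-(1 / (2 * π))) • ((ContinuousLinearMap.mul ℝ ℝ).bilinearComp
      (ContinuousLinearMap.fst ℝ ℝ (ℝ × ℝ)) (ContinuousLinearMap.fst ℝ ℝ ℝ)
    + (ContinuousLinearMap.mul ℝ ℝ).bilinearComp
      ((ContinuousLinearMap.snd ℝ ℝ ℝ).comp (ContinuousLinearMap.snd ℝ ℝ (ℝ × ℝ)))
      (ContinuousLinearMap.snd ℝ ℝ ℝ))

lemma Ltri_apply (v : ℝ × (ℝ × ℝ)) (w : ℝ × ℝ) :
    Ltri v w = (-(1 / (2 * π))) * (v.1 * w.1 + v.2.2 * w.2) := rfl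

lemma contDiff_Jop {c : ℝ} {φ : ℝ × ℝ → ℂ} (h : Band c φ) :
    ContDiff ℝ (⊤ : ℕ∞) (Jop (synth φ)) := by
  let ν : Measure (ℝ × (ℝ × ℝ)) := (volume.restrict (Set.uIoc 0 1)).prod volume
  let T : ℝ × (ℝ × ℝ) → ℝ × (ℝ × ℝ) := fun p => (p.1 * p.2.1, p.2)
  have hT : Measurable T := by fun_prop
  have hφ2 : Measurable (fun v : ℝ × (ℝ × ℝ) => φ v.2) := h.meas.comp measurable_snd
  have hI : ∀ n : ℕ, Integrable (fun v : ℝ × (ℝ × ℝ) => ‖v‖ ^ n * ‖φ v.2‖) (ν.map T) := by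
    intro n
    rw [integrable_map_measure ?_ hT.aemeasurable]
    · have h0 : Integrable (fun p : ℝ × (ℝ × ℝ) => ‖p.2‖ ^ n * ‖φ p.2‖) ν := (h.pow_int n).comp_snd _
      refine h0.mono' ?_ ?_
      · have : Measurable (fun v : ℝ × (ℝ × ℝ) => ‖v‖ ^ n * ‖φ v.2‖) :=
        (measurable_norm.pow_const n).mul hφ2.norm
        exact (this.comp hT).aestronglyMeasurable
      · have : ∀ᵐ p ∂ν, p.1 ∈ Set.uIoc (0:ℝ) 1 := 
          Measure.quasiMeasurePreserving_fst.ae (ae_restrict_mem measurableSet_uIoc)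
        filter_upwards [this] with p hp
        simp only [Function.comp, T]
        rw [Real.norm_of_nonneg (by positivity)]
        gcongr
        rw [Set.uIoc_of_le zero_le_one] at hp
        rw [Prod.norm_def]
        refine max_le ?_ le_rfl
        simp only [norm_mul, Real.norm_eq_abs]
        calc |p.1| * |p.2.1| ≤ 1 * ‖p.2‖ := by
              gcongr
              · rw [abs_of_pos hp.1]; exact hp.2
              · exact norm_fst_le p.2
          _ = _ := one_mul _
    · have : Measurable (fun v : ℝ × (ℝ × ℝ) => ‖v‖ ^ n * ‖φ v.2‖) :=
        (measurable_norm.pow_const n).mul hφ2.norm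
      exact this.aestronglyMeasurable
  have hC := VectorFourier.contDiff_fourierIntegral (N := (⊤ : ℕ∞)) Ltri (μ := ν.map T)
    (f := fun v => φ v.2) (fun n _ => hI n)
  have hx1 : ContDiff ℝ (⊤ : ℕ∞) (fun x : ℝ × ℝ => (x.1 : ℂ)) :=
    Complex.ofRealCLM.contDiff.comp contDiff_fst
  suffices hs : Jop (synth φ) = fun x => (x.1 : ℂ) *
      VectorFourier.fourierIntegral 𝐞 (ν.map T) Ltri.toLinearMap₁₂ (fun v => φ v.2) x by
    rw [hs]; exact hx1.mul hC
  ext x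
  have h1 : Jop (synth φ) x = x.1 * ∫ s in (0:ℝ)..1, synth φ (s * x.1, x.2) := by
    have := intervalIntegral.smul_integral_comp_mul_right (a := 0) (b := 1)
      (fun t => synth φ (t, x.2)) x.1
    simp only [zero_mul, one_mul] at this
    rw [Jop, ← this, Complex.real_smul]
  rw [h1]
  congr 1
  unfold synth VectorFourier.fourierIntegral
  rw [integral_map hT.aemeasurable]
  · have h_int : Integrable (fun p : ℝ × (ℝ × ℝ) => φ p.2 * Complex.exp (Complex.I * ((p.2.1 * (p.1 * x.1) + p.2.2 * x.2 : ℝ) : ℂ))) ν := by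
      have : Integrable (fun p : ℝ × (ℝ × ℝ) => φ p.2) ν := h.int.comp_snd _
      refine this.mul_bdd (c := 1) ?_ ?_
      · apply Continuous.aestronglyMeasurable; fun_prop
      · filter_upwards with ξ; rw [norm_cexp_I]
    rw [intervalIntegral.integral_of_le zero_le_one, ← Set.uIoc_of_le zero_le_one]
    refine (integral_prod _ h_int).symm.trans ?_
    congr 1
    ext p
    change _ = ((𝐞 (-((-(1 / (2 * π))) * ((p.1 * p.2.1) * x.1 + p.2.2 * x.2))) : Circle) : ℂ) • φ p.2
    rw [char_scale, smul_eq_mul, mul_comm]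
    congr 3
    push_cast; ring
  · apply AEStronglyMeasurable.smul
    · apply Continuous.aestronglyMeasurable
      have : Continuous fun v : ℝ × (ℝ × ℝ) => Ltri v x := by fun_prop
      have h3 : Continuous (fun z : Circle => (z : ℂ)) := by fun_prop
      exact h3.comp (Real.continuous_fourierChar.comp this.neg)
    · exact hφ2.aestronglyMeasurable

lemma pd1_Jop {c : ℝ} {φ : ℝ × ℝ → ℂ} (h : Band c φ) (z : ℝ × ℝ) :
    pd1 (Jop (synth φ)) z = synth φ z := by
  have hd : DifferentiableAt ℝ (Jop (synth φ)) z := (contDiff_Jop h).differentiable (by simp) z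
  have h1 : HasDerivAt (fun t : ℝ => Jop (synth φ) (t, z.2)) (fderiv ℝ (Jop (synth φ)) z (1, 0)) z.1 := by
    have hg : HasDerivAt (fun t : ℝ => ((t, z.2) : ℝ × ℝ)) (1, 0) z.1 :=
      (hasDerivAt_id z.1).prodMk (hasDerivAt_const _ _)
    exact hd.hasFDerivAt.comp_hasDerivAt z.1 hg
  have hcont : Continuous fun t : ℝ => synth φ (t, z.2) :=
    (contDiff_synth h).continuous.comp (by fun_prop)
  have h2 : HasDerivAt (fun t : ℝ => Jop (synth φ) (t, z.2)) (synth φ (z.1, z.2)) z.1 :=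
    intervalIntegral.integral_hasDerivAt_right (hcont.intervalIntegrable _ _)
      (hcont.stronglyMeasurableAtFilter _ _) hcont.continuousAt
  exact h1.unique h2
lemma Band.mono {c d : ℝ} {φ : ℝ × ℝ → ℂ} (h : Band c φ) (hcd : c ≤ d) : Band d φ :=
  ⟨h.meas, h.int, fun ξ hξ => h.supp ξ fun h' => hξ (by
    rw [mem_sqIcc] at h' ⊢; exact ⟨h'.1.trans hcd, h'.2.trans hcd⟩)⟩

lemma Band.const_mul {c : ℝ} {φ : ℝ × ℝ → ℂ} (h : Band c φ) (a : ℂ) :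
    Band c (fun ξ => a * φ ξ) :=
  ⟨h.meas.const_mul a, h.int.const_mul a, fun ξ hξ => by simp [h.supp ξ hξ]⟩

lemma synth_const_mul (a : ℂ) (φ : ℝ × ℝ → ℂ) (x : ℝ × ℝ) :
    synth (fun ξ => a * φ ξ) x = a * synth φ x := by
  simp only [synth, mul_assoc, integral_const_mul]

def qker (γ : ℝ × ℝ → ℂ) (ξ ζ : ℝ × ℝ) : ℂ :=
  (γ (ζ - ξ) - γ (ζ - (0, ξ.2))) / (Complex.I * (ξ.1 : ℂ))

lemma norm_qker_le {γ : ℝ × ℝ → ℂ} {C : NNReal} (hL : LipschitzWith C γ) (ξ ζ : ℝ × ℝ) :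
    ‖qker γ ξ ζ‖ ≤ C := by
  by_cases h : ξ.1 = 0
  · simp [qker, h]
  · rw [qker, norm_div, norm_mul, Complex.norm_I, one_mul, Complex.norm_real]
    rw [div_le_iff₀ (by simpa using h)]
    have := hL.dist_le_mul (ζ - ξ) (ζ - (0, ξ.2))
    rw [dist_eq_norm, dist_eq_norm] at this
    refine this.trans (le_of_eq ?_)
    congr 1
    have : ζ - ξ - (ζ - (0, ξ.2)) = (-ξ.1, 0) := by ext <;> simp
    rw [this, Prod.norm_mk]; simp

lemma qker_zero {γ : ℝ × ℝ → ℂ} {c d : ℝ} (hc : 0 ≤ c) (hγ : ∀ ξ, ξ ∉ sqIcc d → γ ξ = 0)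
    {ξ ζ : ℝ × ℝ} (hξ : ξ ∈ sqIcc c) (hζ : ζ ∉ sqIcc (c + d)) : qker γ ξ ζ = 0 := by
  rw [mem_sqIcc] at hξ hζ
  have key : ∀ a b : ℝ, |a| ≤ c → |b - a| ≤ d → |b| ≤ c + d := by
    intro a b ha hb
    rw [abs_le] at *; constructor <;> linarith
  have h1 : γ (ζ - ξ) = 0 := by
    apply hγ; rw [mem_sqIcc]; rintro ⟨h1, h2⟩
    exact hζ ⟨key _ _ hξ.1 h1, key _ _ hξ.2 h2⟩
  have h2 : γ (ζ - (0, ξ.2)) = 0 := by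
    apply hγ; rw [mem_sqIcc]; rintro ⟨h1, h2⟩
    exact hζ ⟨key 0 _ (by simpa using hc) h1, key _ _ hξ.2 h2⟩
  simp [qker, h1, h2]

lemma synth_translate (γ : ℝ × ℝ → ℂ) (ξ x : ℝ × ℝ) :
    ∫ ζ : ℝ × ℝ, γ (ζ - ξ) * Complex.exp (Complex.I * ((ζ.1 * x.1 + ζ.2 * x.2 : ℝ) : ℂ))
      = synth γ x * Complex.exp (Complex.I * ((ξ.1 * x.1 + ξ.2 * x.2 : ℝ) : ℂ)) := by
  rw [← integral_add_right_eq_self _ ξ, synth, ← integral_mul_const]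
  congr 1; ext ζ
  rw [mul_assoc, ← Complex.exp_add]
  simp only [add_sub_cancel_right, Prod.fst_add, Prod.snd_add]
  congr 2; push_cast; ring

lemma synth_qker {γ : ℝ × ℝ → ℂ} (hγ : Integrable γ) (ξ x : ℝ × ℝ) :
    ∫ ζ : ℝ × ℝ, qker γ ξ ζ * Complex.exp (Complex.I * ((ζ.1 * x.1 + ζ.2 * x.2 : ℝ) : ℂ))
      = synth γ x * ker ξ x := by
  have h1 := synth_integrable (hγ.comp_sub_right ξ) x
  have h2 := synth_integrable (hγ.comp_sub_right (0, ξ.2)) x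
  have e1 := synth_translate γ ξ x
  have e2 := synth_translate γ (0, ξ.2) x
  have : ∀ ζ : ℝ × ℝ, qker γ ξ ζ * Complex.exp (Complex.I * ((ζ.1 * x.1 + ζ.2 * x.2 : ℝ) : ℂ))
     = (γ (ζ - ξ) * Complex.exp (Complex.I * ((ζ.1 * x.1 + ζ.2 * x.2 : ℝ) : ℂ))
      - γ (ζ - (0, ξ.2)) * Complex.exp (Complex.I * ((ζ.1 * x.1 + ζ.2 * x.2 : ℝ) : ℂ)))
        / (Complex.I * (ξ.1 : ℂ)) := by
    intro ζ; rw [qker]; ring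
  simp_rw [this]
  rw [integral_div, integral_sub h1 h2, e1, e2, ker]
  simp only [zero_mul, zero_add]
  ring

lemma measurableSet_sqIcc (c : ℝ) : MeasurableSet (sqIcc c) := isClosed_Icc.measurableSet

lemma isCompact_sqIcc (c : ℝ) : IsCompact (sqIcc c) := isCompact_Icc

/-- The product lemma. -/
lemma Band.prod {c d : ℝ} {φ γ : ℝ × ℝ → ℂ} {C : NNReal} (hc : 0 ≤ c) (h : Band c φ) (hγ : Band d γ)
    (hL : LipschitzWith C γ) :
    ∃ φ', Band (c + d) φ' ∧ ∀ x, synth φ' x = synth γ x * Jop (synth φ) x := by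
  let Q : (ℝ × ℝ) × (ℝ × ℝ) → ℂ := fun p => φ p.2 * qker γ p.2 p.1
  have hQm : Measurable Q := by
    have := hL.continuous.measurable
    have h2 := h.meas
    simp only [Q, qker]
    fun_prop
  have hQ0 : ∀ p : (ℝ × ℝ) × (ℝ × ℝ), p.1 ∉ sqIcc (c + d) → Q p = 0 := by
    intro p hp
    by_cases hp2 : p.2 ∈ sqIcc c
    · simp [Q, qker_zero hc hγ.supp hp2 hp]
    · simp [Q, h.supp _ hp2]
  have hQi : Integrable Q := by
    have hb : Integrable (fun p : (ℝ × ℝ) × (ℝ × ℝ) =>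
        (sqIcc (c + d)).indicator (fun _ => (C : ℝ)) p.1 * ‖φ p.2‖) := by
      refine Integrable.mul_prod (μ := volume) (ν := volume) (f := (sqIcc (c + d)).indicator (fun _ => (C : ℝ))) (g := fun ξ => ‖φ ξ‖) ?_ h.int.norm
      rw [integrable_indicator_iff (measurableSet_sqIcc _)]
      exact integrableOn_const (isCompact_sqIcc _).measure_ne_top
    refine hb.mono' hQm.aestronglyMeasurable ?_
    filter_upwards with p
    by_cases hp : p.1 ∈ sqIcc (c + d)
    · rw [Set.indicator_of_mem hp, mul_comm, norm_mul]
      exact mul_le_mul_of_nonneg_left (norm_qker_le hL _ _) (norm_nonneg _)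
    · simp [hQ0 p hp, Set.indicator_of_notMem hp]
  refine ⟨fun ζ => ∫ ξ, Q (ζ, ξ), ⟨?_, ?_, ?_⟩, ?_⟩
  · exact (hQm.stronglyMeasurable.integral_prod_right' (ν := volume)).measurable
  · exact hQi.integral_prod_left
  · intro ζ hζ
    simp [hQ0 (ζ, _) hζ]
  · intro x
    rw [Jop_synth h.int, synth]
    have h_int : Integrable (Function.uncurry fun (ζ ξ : ℝ × ℝ) => Q (ζ, ξ) * Complex.exp (Complex.I * ((ζ.1 * x.1 + ζ.2 * x.2 : ℝ) : ℂ)))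
        ((volume : Measure (ℝ × ℝ)).prod (volume : Measure (ℝ × ℝ))) := by
      refine Integrable.mul_bdd (c := 1) hQi ?_ ?_
      · apply Continuous.aestronglyMeasurable; fun_prop
      · filter_upwards with ξ; rw [norm_cexp_I]
    simp_rw [← integral_mul_const]
    rw [integral_integral_swap h_int, ← integral_const_mul]
    congr 1; ext ξ
    simp only [Q, mul_assoc]
    rw [integral_const_mul, synth_qker hγ.int]
    ring

lemma ftFunctional_Jop {c : ℝ} {φ : ℝ × ℝ → ℂ} (h : Band c φ) (ψ : 𝓢(ℝ × ℝ, ℂ)) :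
    ftFunctional (Jop (synth φ)) ψ
      = ∫ ξ : ℝ × ℝ, φ ξ * ((ψ ξ - ψ (0, ξ.2)) / (Complex.I * (ξ.1 : ℂ))) := by
  obtain ⟨Ψ, hΨ, hinv⟩ := FT1 ψ
  unfold ftFunctional
  rw [← hΨ]
  simp_rw [Jop_synth h.int, ← integral_mul_const]
  have hΨint : Integrable Ψ := Ψ.integrable
  have h_int : Integrable (Function.uncurry fun (x ξ : ℝ × ℝ) => φ ξ * ker ξ x * Ψ x)
      ((volume : Measure (ℝ × ℝ)).prod (volume : Measure (ℝ × ℝ))) := by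
    have hb := Integrable.mul_prod (μ := (volume : Measure (ℝ × ℝ))) (ν := (volume : Measure (ℝ × ℝ)))
      (Ψ.integrable_pow_mul volume 1) h.int.norm
    refine hb.mono' ?_ ?_
    · apply Measurable.aestronglyMeasurable
      have h1 := h.meas.comp (measurable_snd : Measurable (Prod.snd : (ℝ × ℝ) × (ℝ × ℝ) → ℝ × ℝ))
      have h2 := measurable_ker.comp (measurable_swap : Measurable (Prod.swap : (ℝ × ℝ) × (ℝ × ℝ) → _))
      have h3 := Ψ.continuous.measurable.comp (measurable_fst : Measurable (Prod.fst : (ℝ × ℝ) × (ℝ × ℝ) → ℝ × ℝ))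
      exact (h1.mul h2).mul h3
    · filter_upwards with p
      simp only [Function.uncurry, norm_mul, pow_one]
      have := (norm_ker_le p.2 p.1).trans (norm_fst_le p.1)
      calc ‖φ p.2‖ * ‖ker p.2 p.1‖ * ‖Ψ p.1‖ ≤ ‖φ p.2‖ * ‖p.1‖ * ‖Ψ p.1‖ := by gcongr
        _ = _ := by ring
  rw [integral_integral_swap h_int]
  congr 1; ext ξ
  simp only [mul_assoc]
  rw [integral_const_mul]
  congr 1
  have h1 := synth_integrable hΨint ξ
  have h2 := synth_integrable hΨint (0, ξ.2)
  rw [hinv ξ, hinv (0, ξ.2), synth, synth, ← integral_sub h1 h2, ← integral_div]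
  congr 1; ext x
  rw [ker]
  have e1 : x.1 * ξ.1 + x.2 * ξ.2 = ξ.1 * x.1 + ξ.2 * x.2 := by ring
  have e2 : x.1 * (0:ℝ) + x.2 * ξ.2 = ξ.2 * x.2 := by ring
  simp only [e1, e2]
  ring

lemma support_Jop {c : ℝ} {φ : ℝ × ℝ → ℂ} (hc : 0 ≤ c) (h : Band c φ) :
    funcSupport (ftFunctional (Jop (synth φ))) ⊆ sqIcc c := by
  unfold funcSupport
  rw [Set.compl_subset_comm]
  apply Set.subset_sUnion_of_mem
  refine ⟨(isCompact_sqIcc c).isClosed.isOpen_compl, fun ψ hψ => ?_⟩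
  rw [ftFunctional_Jop h]
  have hz : ∀ ξ ∈ sqIcc c, ψ ξ = 0 := by
    intro ξ hξ
    by_contra hne
    exact hψ (subset_tsupport _ hne) hξ
  rw [← integral_zero (ℝ × ℝ) ℂ]
  congr 1; ext ξ
  by_cases hξ : ξ ∈ sqIcc c
  · have h0 : ((0, ξ.2) : ℝ × ℝ) ∈ sqIcc c := by
      rw [mem_sqIcc] at hξ ⊢; exact ⟨by simpa using hc, hξ.2⟩
    simp [hz ξ hξ, hz _ h0]
  · simp [h.supp ξ hξ]

lemma order_Jop {c : ℝ} {φ : ℝ × ℝ → ℂ} (h : Band c φ) :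
    funcOrderAtMost (ftFunctional (Jop (synth φ))) 1 := by
  intro K hK
  refine ⟨∫ ξ, ‖φ ξ‖, fun ψ hψ B hB hbd => ?_⟩
  have hd : ∀ z, ‖fderiv ℝ ψ z (1, 0)‖ ≤ B := by
    intro z
    by_cases hz : z ∈ K
    · exact hbd (1, 0) (by simp) z hz
    · have : fderiv ℝ ψ z = 0 := by
        by_contra hne
        exact hz (hψ (support_fderiv_subset ℝ hne))
      simpa [this] using hB
  rw [ftFunctional_Jop h, ← integral_mul_const]
  refine norm_integral_le_of_norm_le (h.int.norm.mul_const _) ?_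
  filter_upwards [ae_fst_ne] with ξ hξ
  rw [norm_mul]
  refine mul_le_mul_of_nonneg_left ?_ (norm_nonneg _)
  rw [norm_div, norm_mul, Complex.norm_I, one_mul, Complex.norm_real, div_le_iff₀ (by simpa using hξ)]
  have hder : ∀ t ∈ (Set.univ : Set ℝ), HasDerivWithinAt (fun t : ℝ => ψ (t, ξ.2)) (fderiv ℝ ψ (t, ξ.2) (1, 0)) Set.univ t := by
    intro t _
    have hg : HasDerivAt (fun t : ℝ => ((t, ξ.2) : ℝ × ℝ)) (1, 0) t :=
      (hasDerivAt_id t).prodMk (hasDerivAt_const _ _)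
    exact ((ψ.hasFDerivAt (t, ξ.2)).comp_hasDerivAt t hg).hasDerivWithinAt
  have := convex_univ.norm_image_sub_le_of_norm_hasDerivWithin_le hder (fun t _ => hd (t, ξ.2)) (Set.mem_univ 0) (Set.mem_univ ξ.1)
  simpa using this

lemma growth_Jop {c : ℝ} {φ : ℝ × ℝ → ℂ} (h : Band c φ) : PolyGrowth (Jop (synth φ)) := by
  refine ⟨∫ ξ, ‖φ ξ‖, 1, fun z => (norm_Jop_synth_le h.int z).trans ?_⟩
  have : 0 ≤ ∫ ξ, ‖φ ξ‖ := by positivity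
  gcongr
  rw [pow_one]
  have := norm_fst_le z
  rw [Real.norm_eq_abs] at this
  linarith
lemma Band.add {c : ℝ} {φ φ' : ℝ × ℝ → ℂ} (h : Band c φ) (h' : Band c φ') :
    Band c (fun ξ => φ ξ + φ' ξ) :=
  ⟨h.meas.add h'.meas, h.int.add h'.int, fun ξ hξ => by simp [h.supp ξ hξ, h'.supp ξ hξ]⟩

lemma synth_add {φ φ' : ℝ × ℝ → ℂ} (h : Integrable φ) (h' : Integrable φ') (x : ℝ × ℝ) :
    synth (fun ξ => φ ξ + φ' ξ) x = synth φ x + synth φ' x := by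
  simp only [synth, add_mul]
  exact integral_add (synth_integrable h x) (synth_integrable h' x)

lemma ker_integrable {φ : ℝ × ℝ → ℂ} (h : Integrable φ) (x : ℝ × ℝ) :
    Integrable (fun ξ : ℝ × ℝ => φ ξ * ker ξ x) := by
  refine h.mul_bdd (c := |x.1|) ?_ ?_
  · exact (measurable_ker.comp (measurable_id.prodMk measurable_const)).aestronglyMeasurable
  · filter_upwards with ξ; exact norm_ker_le ξ x

lemma Jop_add {φ φ' : ℝ × ℝ → ℂ} (h : Integrable φ) (h' : Integrable φ') (x : ℝ × ℝ) :
    Jop (synth (fun ξ => φ ξ + φ' ξ)) x = Jop (synth φ) x + Jop (synth φ') x := by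
  have hs : Integrable (fun ξ => φ ξ + φ' ξ) := h.add h'
  rw [Jop_synth h, Jop_synth h', Jop_synth hs]
  simp only [add_mul]
  exact integral_add (ker_integrable h x) (ker_integrable h' x)

lemma mem_unitSq {z : ℝ × ℝ} : z ∈ unitSq ↔ |z.1| ≤ 1 ∧ |z.2| ≤ 1 := mem_sqIcc

lemma Jop_bound {W : ℝ × ℝ → ℂ} {B : ℝ} (hB : 0 ≤ B) (hW : ∀ z ∈ unitSq, ‖W z‖ ≤ B) {z : ℝ × ℝ}
    (hz : z ∈ unitSq) : ‖Jop W z‖ ≤ B := by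
  rw [mem_unitSq] at hz
  refine (intervalIntegral.norm_integral_le_of_norm_le_const (C := B) ?_).trans ?_
  · intro t ht
    apply hW
    rw [mem_unitSq]
    refine ⟨?_, hz.2⟩
    have h1 := Set.uIoc_subset_uIcc ht
    have h2 := Set.abs_sub_left_of_mem_uIcc h1
    simp only [sub_zero] at h2
    exact h2.trans hz.1
  · rw [sub_zero]; nlinarith [hz.1, abs_nonneg z.1]

lemma iterate_exists {cf cg : ℝ} (hcf : 0 ≤ cf) (hcg : 0 ≤ cg) {φ γ : ℝ × ℝ → ℂ} {C : NNReal}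
    (hφ : Band cf φ) (hγ : Band cg γ) (hL : LipschitzWith C γ) {G S : ℝ} (hG : 0 ≤ G) (hneg : 0 < 1 - 2 * G)
    (hS : 0 ≤ S) (hφb : ∀ z ∈ unitSq, ‖synth φ z‖ ≤ 2 * S)
    (hγb : ∀ z ∈ unitSq, ‖synth γ z‖ ≤ 2 * G) (k : ℕ) :
    ∃ φk φt : ℝ × ℝ → ℂ, Band (cf + k * cg) φk ∧ Band (cf + k * cg) φt ∧
      (∀ z ∈ unitSq, ‖synth φk z‖ ≤ 2 * S * (2 * G) ^ k) ∧
      (∀ z ∈ unitSq, (1 - 2 * G) * ‖Jop (synth φt) z - Jop (synth φk) z‖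
        ≤ 2 * S * (1 - (2 * G) ^ k)) ∧
      (∀ z, synth φt z = synth φ z - Complex.I * synth γ z *
        (Jop (synth φt) z - Jop (synth φk) z)) := by
  induction k with
  | zero =>
    refine ⟨φ, φ, by simpa using hφ, by simpa using hφ, by simpa using hφb, ?_, ?_⟩
    · intro z _; simp
    · intro z; simp
  | succ k ih =>
    obtain ⟨φk, φt, hk, ht, hb, hd, he⟩ := ih
    obtain ⟨φ', h', hs'⟩ := hk.prod (by positivity) hγ hL
    have h1 : cf + k * cg + cg = cf + ((k + 1 : ℕ) : ℝ) * cg := by push_cast; ring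
    rw [h1] at h'
    have h2 := h'.const_mul (-Complex.I)
    have ht' := ht.mono (d := cf + ((k + 1 : ℕ) : ℝ) * cg) (by rw [← h1]; linarith)
    have hsum : ∀ z, Jop (synth fun ξ => φt ξ + -Complex.I * φ' ξ) z
        - Jop (synth fun ξ => -Complex.I * φ' ξ) z = Jop (synth φt) z := by
      intro z; rw [Jop_add ht.int h2.int]; ring
    have hJk : ∀ z ∈ unitSq, ‖Jop (synth φk) z‖ ≤ 2 * S * (2 * G) ^ k :=
      fun z hz => Jop_bound (by positivity) hb hz
    refine ⟨fun ξ => -Complex.I * φ' ξ, fun ξ => φt ξ + -Complex.I * φ' ξ, h2, ht'.add h2, ?_, ?_, ?_⟩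
    · intro z hz
      rw [synth_const_mul, hs']
      simp only [norm_mul, norm_neg, Complex.norm_I, one_mul]
      calc ‖synth γ z‖ * ‖Jop (synth φk) z‖ ≤ (2 * G) * (2 * S * (2 * G) ^ k) := by
            gcongr
            · exact hγb z hz
            · exact hJk z hz
        _ = _ := by ring
    · intro z hz
      rw [hsum]
      · have tri : ‖Jop (synth φt) z‖ ≤ ‖Jop (synth φt) z - Jop (synth φk) z‖ + ‖Jop (synth φk) z‖ := by
          simpa using norm_add_le (Jop (synth φt) z - Jop (synth φk) z) (Jop (synth φk) z)
        have a := hd z hz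
        have b := hJk z hz
        calc (1 - 2 * G) * ‖Jop (synth φt) z‖ ≤ (1 - 2 * G) * (‖Jop (synth φt) z - Jop (synth φk) z‖ + ‖Jop (synth φk) z‖) := by gcongr
          _ ≤ 2 * S * (1 - (2 * G) ^ k) + (1 - 2 * G) * (2 * S * (2 * G) ^ k) := by
            rw [mul_add]; gcongr
          _ = _ := by ring
    · intro z
      rw [hsum, synth_add ht.int h2.int, synth_const_mul, hs', he]
      ring
lemma bdd_supOn {h : ℝ × ℝ → ℂ} (hc : ContinuousOn h unitSq) :
    BddAbove (Set.range fun z : unitSq => ‖h (z : ℝ × ℝ)‖) := by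
  have := ((isCompact_Icc : IsCompact unitSq).image_of_continuousOn hc.norm).bddAbove
  rwa [Set.image_eq_range] at this

lemma le_supOn {h : ℝ × ℝ → ℂ} (hc : ContinuousOn h unitSq) {z : ℝ × ℝ} (hz : z ∈ unitSq) :
    ‖h z‖ ≤ supOn h unitSq := le_ciSup (bdd_supOn hc) ⟨z, hz⟩

lemma supOn_nonneg (h : ℝ × ℝ → ℂ) (S : Set (ℝ × ℝ)) : 0 ≤ supOn h S :=
  Real.iSup_nonneg fun _ => norm_nonneg _

lemma bandlimitConst_nonneg (Ω : Set (ℝ × ℝ)) (h : ℝ × ℝ → ℂ) (ε : ℝ) : 0 ≤ bandlimitConst Ω h ε :=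
  Real.sInf_nonneg fun _ hx => hx.1.le


/-- Directional derivative. -/
def pdv (v : ℝ × ℝ) (f : ℝ × ℝ → ℂ) : ℝ × ℝ → ℂ := fun z => fderiv ℝ f z v

lemma pdv_smooth (v : ℝ × ℝ) {f : ℝ × ℝ → ℂ} (hf : ContDiff ℝ (⊤ : ℕ∞) f) :
    ContDiff ℝ (⊤ : ℕ∞) (pdv v f) :=
  (hf.fderiv_right (m := (⊤ : ℕ∞)) (by simp)).clm_apply contDiff_const

lemma pdv_bound {v : ℝ × ℝ} (hv : ‖v‖ ≤ 1) {f : ℝ × ℝ → ℂ} (hf : ContDiff ℝ (⊤ : ℕ∞) f) (n : ℕ)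
    (x : ℝ × ℝ) : ‖iteratedFDeriv ℝ n (pdv v f) x‖ ≤ ‖iteratedFDeriv ℝ (n + 1) f x‖ := by
  have h1 : ContDiff ℝ (⊤ : ℕ∞) (fderiv ℝ f) := hf.fderiv_right (m := (⊤ : ℕ∞)) (by simp)
  have h2 := (ContinuousLinearMap.apply ℝ ℂ v).norm_iteratedFDeriv_comp_left (f := fderiv ℝ f)
    (n := n) h1.contDiffAt (x := x) (by exact_mod_cast le_top)
  rw [norm_iteratedFDeriv_fderiv] at h2
  have h3 : ‖ContinuousLinearMap.apply ℝ ℂ v‖ ≤ 1 := by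
    refine ContinuousLinearMap.opNorm_le_bound _ zero_le_one fun L => ?_
    rw [ContinuousLinearMap.apply_apply, one_mul]
    exact (L.le_opNorm v).trans (mul_le_of_le_one_right (norm_nonneg _) hv)
  exact h2.trans (mul_le_of_le_one_left (norm_nonneg _) h3)

lemma pdv_iter {v : ℝ × ℝ} (hv : ‖v‖ ≤ 1) (k : ℕ) : ∀ {f : ℝ × ℝ → ℂ}, ContDiff ℝ (⊤ : ℕ∞) f →
    ContDiff ℝ (⊤ : ℕ∞) ((pdv v)^[k] f) ∧
    ∀ n x, ‖iteratedFDeriv ℝ n ((pdv v)^[k] f) x‖ ≤ ‖iteratedFDeriv ℝ (n + k) f x‖ := by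
  induction k with
  | zero => intro f hf; exact ⟨hf, fun n x => le_rfl⟩
  | succ k ih =>
    intro f hf
    obtain ⟨a, b⟩ := ih (pdv_smooth v hf)
    refine ⟨a, fun n x => ?_⟩
    rw [Function.iterate_succ_apply]
    exact (b n x).trans (pdv_bound hv hf _ x)

lemma mderiv2_bound {f : ℝ × ℝ → ℂ} (hf : ContDiff ℝ (⊤ : ℕ∞) f) (α : ℕ × ℕ) (x : ℝ × ℝ) :
    ‖mderiv2 α f x‖ ≤ ‖iteratedFDeriv ℝ (α.1 + α.2) f x‖ := by
  have n1 : ‖((1, 0) : ℝ × ℝ)‖ ≤ 1 := by simp [Prod.norm_def]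
  have n2 : ‖((0, 1) : ℝ × ℝ)‖ ≤ 1 := by simp [Prod.norm_def]
  obtain ⟨a, b⟩ := pdv_iter n2 α.2 hf
  obtain ⟨_, d⟩ := pdv_iter n1 α.1 a
  have := (d 0 x).trans (b _ x)
  rw [norm_iteratedFDeriv_zero, zero_add] at this
  exact this

lemma char_scale_neg (r : ℝ) : ((𝐞 (-((1 / (2 * π)) * r)) : Circle) : ℂ) = Complex.exp (-Complex.I * (r : ℂ)) := by
  have := char_scale (-r)
  rw [neg_mul_neg] at this
  rw [this]; push_cast; ring_nf

lemma norm_neg_Lneg : ‖-Lneg‖ ≤ 1 / π := by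
  have hpi := Real.pi_pos
  refine ContinuousLinearMap.opNorm_le_bound _ (by positivity) fun v => ?_
  refine ContinuousLinearMap.opNorm_le_bound _ (by positivity) fun w => ?_
  change ‖-(Lneg v w)‖ ≤ _
  rw [Lneg_apply, norm_neg, norm_mul, norm_neg, Real.norm_of_nonneg (by positivity : 0 ≤ 1 / (2 * π))]
  have h1 : ‖v.1 * w.1 + v.2 * w.2‖ ≤ ‖v‖ * ‖w‖ + ‖v‖ * ‖w‖ := by
    refine (norm_add_le _ _).trans ?_
    rw [norm_mul, norm_mul]
    gcongr
    · exact norm_fst_le v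
    · exact norm_fst_le w
    · exact norm_snd_le v
    · exact norm_snd_le w
  calc 1 / (2 * π) * ‖v.1 * w.1 + v.2 * w.2‖ ≤ 1 / (2 * π) * (‖v‖ * ‖w‖ + ‖v‖ * ‖w‖) := by gcongr
    _ = 1 / π * ‖v‖ * ‖w‖ := by field_simp; ring

lemma paperFT_bound {H : ℝ × ℝ → ℂ} (hH : Integrable H) {B : ℝ} (hB : 0 ≤ B)
    (hs : ∀ z, z ∉ sqIcc (3 / 2) → H z = 0) (hb : ∀ z, ‖H z‖ ≤ B) (n : ℕ) (ξ : ℝ × ℝ) :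
    ‖iteratedFDeriv ℝ n (paperFT H) ξ‖ ≤ 1 / (4 * π ^ 2) * (9 * (3 ^ n * B)) := by
  have hpi := Real.pi_pos
  have h_int : ∀ k : ℕ, Integrable (fun v : ℝ × ℝ => ‖v‖ ^ k * ‖H v‖) := by
    intro k
    refine (hH.norm.const_mul ((3 / 2 : ℝ) ^ k)).mono' ?_ ?_
    · exact ((continuous_norm.pow k).aestronglyMeasurable).mul hH.1.norm
    · filter_upwards with v
      rw [norm_mul, norm_norm, norm_pow, norm_norm]
      by_cases hv : v ∈ sqIcc (3 / 2)
      · gcongr; exact norm_le_of_mem hv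
      · simp [hs v hv]
  have hfn : paperFT H = (1 / (4 * (π : ℂ) ^ 2)) •
      VectorFourier.fourierIntegral 𝐞 volume (-Lneg).toLinearMap₁₂ H := by
    ext x
    unfold paperFT VectorFourier.fourierIntegral
    rw [Pi.smul_apply, smul_eq_mul]
    congr 2
    ext v
    have : (-Lneg).toLinearMap₁₂ v x = (1 / (2 * π)) * (x.1 * v.1 + x.2 * v.2) := by
      change -(Lneg v x) = _
      rw [Lneg_apply]; ring
    rw [this]
    change _ = ((𝐞 (-((1 / (2 * π)) * (x.1 * v.1 + x.2 * v.2))) : Circle) : ℂ) • H v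
    rw [char_scale_neg, smul_eq_mul, mul_comm]
  have hcd := VectorFourier.contDiff_fourierIntegral (N := (⊤ : ℕ∞)) (-Lneg) (μ := volume) (f := H)
    (fun n _ => h_int n)
  rw [hfn, iteratedFDeriv_const_smul_apply (hcd.contDiffAt.of_le (by exact_mod_cast le_top)), norm_smul]
  have hc : ‖(1 / (4 * (π : ℂ) ^ 2))‖ = 1 / (4 * π ^ 2) := by
    simp [abs_of_pos hpi]
  rw [hc]
  gcongr
  rw [VectorFourier.iteratedFDeriv_fourierIntegral (N := (⊤ : ℕ∞)) (-Lneg) (fun n _ => h_int n) hH.1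
    (by exact_mod_cast le_top)]
  refine (VectorFourier.norm_fourierIntegral_le_integral_norm _ _ _ _ _).trans ?_
  have hpt : ∀ v, ‖VectorFourier.fourierPowSMulRight (-Lneg) H v n‖
      ≤ (sqIcc (3 / 2)).indicator (fun _ => 3 ^ n * B) v := by
    intro v
    refine (VectorFourier.norm_fourierPowSMulRight_le _ _ _ _).trans ?_
    by_cases hv : v ∈ sqIcc (3 / 2)
    · rw [Set.indicator_of_mem hv, ← mul_pow]
      have a : 2 * π * ‖-Lneg‖ * ‖v‖ ≤ 3 := by
        calc 2 * π * ‖-Lneg‖ * ‖v‖ ≤ 2 * π * (1 / π) * (3 / 2) := by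
              gcongr
              · exact norm_neg_Lneg
              · exact norm_le_of_mem hv
          _ = 3 := by field_simp
      gcongr
      exact hb v
    · rw [Set.indicator_of_notMem hv, hs v hv]; simp
  have hvol : volume (sqIcc (3 / 2)) = ENNReal.ofReal 9 := by
    unfold sqIcc
    rw [← Set.Icc_prod_Icc, Measure.volume_eq_prod, Measure.prod_prod, Real.volume_Icc,
      ← ENNReal.ofReal_mul (by norm_num)]
    norm_num
  calc ∫ v, ‖VectorFourier.fourierPowSMulRight (-Lneg) H v n‖
      ≤ ∫ v, (sqIcc (3 / 2)).indicator (fun _ => 3 ^ n * B) v := by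
        refine integral_mono_of_nonneg (Filter.Eventually.of_forall fun v => norm_nonneg _) ?_
          (Filter.Eventually.of_forall hpt)
        rw [integrable_indicator_iff (measurableSet_sqIcc _)]
        exact integrableOn_const (by rw [hvol]; simp)
    _ = 9 * (3 ^ n * B) := by
        rw [integral_indicator (measurableSet_sqIcc _), setIntegral_const, Measure.real, hvol]
        simp

lemma schwartz_bounded (Ψ : 𝓢(ℝ × ℝ, ℂ)) (n : ℕ) : ∃ C : ℝ, ∀ ξ, ‖iteratedFDeriv ℝ n Ψ ξ‖ ≤ C := by
  obtain ⟨C, hC⟩ := Ψ.decay' 0 n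
  refine ⟨C, fun ξ => ?_⟩
  have := hC ξ
  rw [pow_zero, one_mul] at this
  exact this

lemma cutoff_exists (Ψ : 𝓢(ℝ × ℝ, ℂ)) {P : ℝ} (hP : 0 ≤ P)
    (hb : ∀ n ≤ 2, ∀ ξ, ‖iteratedFDeriv ℝ n Ψ ξ‖ ≤ P) {η : ℝ} (hη : 0 < η) :
    ∃ (Ψ' : 𝓢(ℝ × ℝ, ℂ)) (R : ℝ), 0 < R ∧ (∀ ξ, ξ ∉ sqIcc R → Ψ' ξ = 0) ∧
      (∀ n ≤ 2, ∀ ξ, ‖iteratedFDeriv ℝ n Ψ' ξ‖ ≤ P + η) ∧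
      ∀ x, ‖synth Ψ' x - synth Ψ x‖ ≤ η := by
  let b : ContDiffBump (0 : ℝ × ℝ) := ⟨1, 2, by norm_num, by norm_num⟩
  let χ : ℝ × ℝ → ℂ := fun ξ => (b ξ : ℂ)
  have hχs : ContDiff ℝ (⊤ : ℕ∞) χ := Complex.ofRealCLM.contDiff.comp b.contDiff
  have hχc : HasCompactSupport χ := b.hasCompactSupport.comp_left (g := fun r : ℝ => (r : ℂ)) (by simp)
  have hχn : ∀ ξ, ‖χ ξ‖ ≤ 1 := fun ξ => by
    simp only [χ, Complex.norm_real, Real.norm_of_nonneg b.nonneg]; exact b.le_one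
  have hχz : ∀ ξ, 2 ≤ ‖ξ‖ → χ ξ = 0 := fun ξ h => by
    have : b ξ = 0 := b.zero_of_le_dist (by simpa using h)
    simp [χ, this]
  have hχ1 : χ 0 = 1 := by
    have : b 0 = 1 := b.one_of_mem_closedBall (by simp [b])
    simp [χ, this]
  obtain ⟨M1, hM1⟩ := schwartz_bounded (hχc.toSchwartzMap hχs) 1
  obtain ⟨M2, hM2⟩ := schwartz_bounded (hχc.toSchwartzMap hχs) 2
  have hM1' : ∀ ξ, ‖iteratedFDeriv ℝ 1 χ ξ‖ ≤ M1 := hM1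
  have hM2' : ∀ ξ, ‖iteratedFDeriv ℝ 2 χ ξ‖ ≤ M2 := hM2
  have hM1p : 0 ≤ M1 := (norm_nonneg _).trans (hM1 0)
  have hM2p : 0 ≤ M2 := (norm_nonneg _).trans (hM2 0)
  let sc : ℝ → (ℝ × ℝ) →L[ℝ] (ℝ × ℝ) := fun δ => δ • ContinuousLinearMap.id ℝ (ℝ × ℝ)
  have hsc : ∀ δ ξ, sc δ ξ = δ • ξ := fun δ ξ => rfl
  have hscn : ∀ δ, 0 ≤ δ → ‖sc δ‖ ≤ δ := fun δ hδ => by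
    refine ContinuousLinearMap.opNorm_le_bound _ hδ fun ξ => ?_
    rw [hsc, norm_smul, Real.norm_of_nonneg hδ]
  have hder : ∀ δ, 0 ≤ δ → ∀ i ξ, ‖iteratedFDeriv ℝ i (χ ∘ sc δ) ξ‖
      ≤ ‖iteratedFDeriv ℝ i χ (δ • ξ)‖ * δ ^ i := by
    intro δ hδ i ξ
    rw [(sc δ).iteratedFDeriv_comp_right hχs ξ (by exact_mod_cast le_top)]
    refine (ContinuousMultilinearMap.norm_compContinuousLinearMap_le _ _).trans ?_
    rw [Finset.prod_const, Finset.card_univ, Fintype.card_fin, hsc]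
    gcongr
    exact hscn δ hδ
  have hcsm : ∀ δ, ContDiff ℝ (⊤ : ℕ∞) (χ ∘ sc δ) := fun δ => hχs.comp (sc δ).contDiff
  have hprod : ∀ δ, ContDiff ℝ (⊤ : ℕ∞) (fun ξ => (χ ∘ sc δ) ξ * Ψ ξ) :=
    fun δ => (hcsm δ).mul Ψ.smooth'
  have hlim : Filter.Tendsto (fun k : ℕ => ∫ ξ, ‖χ ((1 / ((k : ℝ) + 1)) • ξ) * Ψ ξ - Ψ ξ‖) Filter.atTop
      (nhds 0) := by
    have h0 : (0 : ℝ) = ∫ ξ : ℝ × ℝ, (0 : ℝ) := by simp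
    rw [h0]
    refine tendsto_integral_of_dominated_convergence (fun ξ => 2 * ‖Ψ ξ‖) ?_ ?_ ?_ ?_
    · intro k
      have : Continuous fun ξ : ℝ × ℝ => χ ((1 / ((k : ℝ) + 1)) • ξ) * Ψ ξ - Ψ ξ :=
        ((hχs.continuous.comp (continuous_const_smul _)).mul Ψ.continuous).sub Ψ.continuous
      exact this.norm.aestronglyMeasurable
    · exact Ψ.integrable.norm.const_mul 2
    · intro k
      filter_upwards with ξ
      rw [norm_norm]
      refine (norm_sub_le _ _).trans ?_
      rw [norm_mul]
      nlinarith [hχn ((1 / ((k : ℝ) + 1)) • ξ), norm_nonneg (Ψ ξ)]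
    · filter_upwards with ξ
      have t1 : Filter.Tendsto (fun k : ℕ => (1 / ((k : ℝ) + 1)) • ξ) Filter.atTop (nhds ((0 : ℝ) • ξ)) :=
        tendsto_one_div_add_atTop_nhds_zero_nat.smul_const ξ
      rw [zero_smul] at t1
      have t2 := (hχs.continuous.tendsto 0).comp t1
      rw [hχ1] at t2
      have t3 := ((t2.mul_const (Ψ ξ)).sub_const (Ψ ξ)).norm
      simpa using t3
  have hlim2 : Filter.Tendsto (fun k : ℕ => (2 * M1 + M2) * P * (1 / ((k : ℝ) + 1))) Filter.atTop (nhds 0) := by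
    simpa using tendsto_one_div_add_atTop_nhds_zero_nat.const_mul ((2 * M1 + M2) * P)
  obtain ⟨k, hk1, hk2⟩ := ((hlim.eventually_lt_const hη).and (hlim2.eventually_lt_const hη)).exists
  set δ : ℝ := 1 / ((k : ℝ) + 1) with hδ
  have hδ0 : 0 < δ := by positivity
  have hδ1 : δ ≤ 1 := by
    rw [hδ, div_le_one (by positivity)]; linarith [(Nat.cast_nonneg k : (0:ℝ) ≤ k)]
  have hz : ∀ ξ, ξ ∉ sqIcc (2 / δ) → χ (δ • ξ) * Ψ ξ = 0 := by
    intro ξ hξ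
    rw [hχz, zero_mul]
    rw [norm_smul, Real.norm_of_nonneg hδ0.le]
    by_contra hlt
    push Not at hlt
    apply hξ
    have : ‖ξ‖ ≤ 2 / δ := by rw [le_div_iff₀ hδ0]; linarith
    rw [mem_sqIcc]
    exact ⟨(norm_fst_le ξ).trans this, (norm_snd_le ξ).trans this⟩
  have hcs : HasCompactSupport (fun ξ => (χ ∘ sc δ) ξ * Ψ ξ) :=
    HasCompactSupport.intro (isCompact_sqIcc (2 / δ)) hz
  refine ⟨hcs.toSchwartzMap (hprod δ), 2 / δ, by positivity, hz, ?_, ?_⟩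
  · intro n hn ξ
    change ‖iteratedFDeriv ℝ n (fun ξ => (χ ∘ sc δ) ξ * Ψ ξ) ξ‖ ≤ _
    refine (norm_iteratedFDeriv_mul_le (N := (⊤ : ℕ∞)) (hcsm δ) (Ψ.smooth ⊤) ξ (by exact_mod_cast le_top)).trans ?_
    have d0 : ‖iteratedFDeriv ℝ 0 (χ ∘ sc δ) ξ‖ ≤ 1 := by
      rw [norm_iteratedFDeriv_zero]; exact hχn _
    have d1 : ‖iteratedFDeriv ℝ 1 (χ ∘ sc δ) ξ‖ ≤ M1 * δ := by
      have := (hder δ hδ0.le 1 ξ).trans (mul_le_mul_of_nonneg_right (hM1' (δ • ξ)) (by positivity))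
      rwa [pow_one] at this
    have d2 : ‖iteratedFDeriv ℝ 2 (χ ∘ sc δ) ξ‖ ≤ M2 * δ := by
      have := (hder δ hδ0.le 2 ξ).trans (mul_le_mul_of_nonneg_right (hM2' (δ • ξ)) (by positivity))
      refine this.trans (mul_le_mul_of_nonneg_left ?_ hM2p)
      nlinarith
    have e0 := hb 0 (by norm_num) ξ
    have e1 := hb 1 (by norm_num) ξ
    have e2 := hb 2 (by norm_num) ξ
    have p00 := mul_le_mul d0 e0 (norm_nonneg _) zero_le_one
    have p01 := mul_le_mul d0 e1 (norm_nonneg _) zero_le_one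
    have p02 := mul_le_mul d0 e2 (norm_nonneg _) zero_le_one
    have p10 := mul_le_mul d1 e0 (norm_nonneg _) (by positivity)
    have p11 := mul_le_mul d1 e1 (norm_nonneg _) (by positivity)
    have p20 := mul_le_mul d2 e0 (norm_nonneg _) (by positivity)
    have q1 : 0 ≤ M1 * δ * P := by positivity
    have q2 : 0 ≤ M2 * δ * P := by positivity
    have hk3 : 2 * (M1 * δ * P) + M2 * δ * P < η := by linarith
    have hgen : ∀ f g : ℕ → ℝ, (∑ i ∈ Finset.range (n + 1), (n.choose i : ℝ) * f i * g (n - i))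
        = (if n = 0 then f 0 * g 0 else if n = 1 then f 0 * g 1 + f 1 * g 0
          else f 0 * g 2 + 2 * (f 1 * g 1) + f 2 * g 0) := by
      intro f g
      interval_cases n <;> simp [Finset.sum_range_succ, mul_assoc]
    rw [hgen (fun i => ‖iteratedFDeriv ℝ i (χ ∘ sc δ) ξ‖) (fun i => ‖iteratedFDeriv ℝ i Ψ ξ‖)]
    split_ifs <;> linarith
  · intro x
    have i1 : Integrable (hcs.toSchwartzMap (hprod δ)) := SchwartzMap.integrable _
    unfold synth
    rw [← integral_sub (synth_integrable i1 x) (synth_integrable Ψ.integrable x)]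
    refine (norm_integral_le_integral_norm _).trans (le_trans (le_of_eq ?_) hk1.le)
    congr 1
    ext ξ
    rw [← sub_mul, norm_mul, norm_cexp_I, mul_one]
    rfl

lemma paperFT_zero : paperFT (0 : ℝ × ℝ → ℂ) = 0 := by
  ext ξ; simp [paperFT]

lemma band_nonempty {U : Set (ℝ × ℝ)} (hU : IsOpen U) (hQU : unitSq ⊆ U) {h : ℝ × ℝ → ℂ}
    (hsm : ContDiffOn ℝ (⊤ : ℕ∞) h U) {ε : ℝ} (hε0 : 0 < ε) :
    {c : ℝ | 0 < c ∧ ∃ fb : SchwartzMap (ℝ × ℝ) ℂ, IsBandlimitedApprox unitSq h ε c fb}.Nonempty := by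
  have hpi3 := Real.pi_gt_three
  set S := supOn h unitSq with hS
  have hS0 : 0 ≤ S := supOn_nonneg _ _
  have hle : ∀ z ∈ unitSq, ‖h z‖ ≤ S := fun z hz => le_supOn (hsm.continuousOn.mono hQU) hz
  rcases hS0.eq_or_lt with hz | hpos
  · refine ⟨1, one_pos, 0, ?_, ?_, ?_, ?_⟩
    · intro ξ _
      have := congrFun paperFT_zero ξ
      exact this
    · intro z hzq
      have := hle z hzq
      rw [← hS, ← hz]
      rw [← hz] at this
      simpa using this
    · intro z; simp [← hS, ← hz]
    · intro α _ ξ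
      have e : paperFT (⇑(0 : SchwartzMap (ℝ × ℝ) ℂ)) = fun _ => 0 := paperFT_zero
      rw [e]
      refine (mderiv2_bound contDiff_const α ξ).trans ?_
      have e2 : iteratedFDeriv ℝ (α.1 + α.2) (fun _ : ℝ × ℝ => (0 : ℂ)) ξ = 0 := by
        have := congrFun (iteratedFDeriv_fun_zero (𝕜 := ℝ) (E := ℝ × ℝ) (F := ℂ) (n := α.1 + α.2)) ξ
        exact this
      rw [e2, norm_zero]; positivity
  · let V : Set (ℝ × ℝ) := (U ∩ h ⁻¹' Metric.ball 0 (2 * S)) ∩ Metric.ball 0 (3 / 2)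
    have hVo : IsOpen V :=
      (hsm.continuousOn.isOpen_inter_preimage hU Metric.isOpen_ball).inter Metric.isOpen_ball
    have hQV : unitSq ⊆ V := by
      intro z hzq
      refine ⟨⟨hQU hzq, ?_⟩, ?_⟩
      · simp only [Set.mem_preimage, mem_ball_zero_iff]
        linarith [hle z hzq]
      · rw [mem_ball_zero_iff]
        exact lt_of_le_of_lt (norm_le_of_mem (c := 1) hzq) (by norm_num)
    obtain ⟨χ, hχ0, hχ1, hχr⟩ := exists_contMDiffMap_zero_one_nhds_of_isClosed
      (modelWithCornersSelf ℝ (ℝ × ℝ)) (n := (⊤ : ℕ∞)) (s := Vᶜ) (t := unitSq)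
      hVo.isClosed_compl isClosed_Icc (Set.disjoint_left.mpr fun z hz1 hz2 => hz1 (hQV hz2))
    have hχs : ContDiff ℝ (⊤ : ℕ∞) χ := χ.contMDiff.contDiff
    have hχsupp : tsupport χ ⊆ V := by
      intro z hzt
      by_contra hzV
      have := hχ0.filter_mono (nhds_le_nhdsSet (show z ∈ Vᶜ from hzV))
      exact (notMem_tsupport_iff_eventuallyEq.mpr this) hzt
    let H : ℝ × ℝ → ℂ := fun z => (χ z : ℂ) * h z
    have hHt : tsupport H ⊆ V := by
      refine subset_trans (closure_mono ?_) hχsupp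
      intro z hz hz0
      apply hz
      simp [H, hz0]
    have hHs : ContDiff ℝ (⊤ : ℕ∞) H := by
      rw [contDiff_iff_contDiffAt]
      intro z
      by_cases hz : z ∈ tsupport H
      swap
      · exact contDiffAt_const.congr_of_eventuallyEq (notMem_tsupport_iff_eventuallyEq.mp hz)
      have hzU : z ∈ U := (hHt hz).1.1
      exact ((Complex.ofRealCLM.contDiff.comp hχs).contDiffAt).mul (hsm.contDiffAt (hU.mem_nhds hzU))
    have hHz : ∀ z, z ∉ V → H z = 0 := fun z hz => by
      by_contra hne
      exact hz (hHt (subset_tsupport H hne))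
    have hVsq : V ⊆ sqIcc (3 / 2) := by
      intro z hz
      have := mem_ball_zero_iff.mp hz.2
      rw [mem_sqIcc]
      exact ⟨(norm_fst_le z).trans this.le, (norm_snd_le z).trans this.le⟩
    have hHq : ∀ z, z ∉ sqIcc (3 / 2) → H z = 0 := fun z hz => hHz z fun hv => hz (hVsq hv)
    have hHc : HasCompactSupport H := HasCompactSupport.intro (isCompact_sqIcc _) hHq
    have hHb : ∀ z, ‖H z‖ ≤ 2 * S := by
      intro z
      by_cases hv : z ∈ V
      · have a : ‖h z‖ < 2 * S := mem_ball_zero_iff.mp hv.1.2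
        have b := hχr z
        simp only [H, norm_mul, Complex.norm_real, Real.norm_of_nonneg b.1]
        nlinarith [b.1, b.2, norm_nonneg (h z)]
      · rw [hHz z hv, norm_zero]; positivity
    have hHeq : ∀ z ∈ unitSq, H z = h z := by
      intro z hz
      have : χ z = 1 := hχ1.self_of_nhdsSet z hz
      simp [H, this]
    let Hs : 𝓢(ℝ × ℝ, ℂ) := hHc.toSchwartzMap hHs
    have hHs' : ⇑Hs = H := rfl
    obtain ⟨Ψ, hΨ, hΨi⟩ := FT1 Hs
    have hbd : ∀ n ≤ 2, ∀ ξ, ‖iteratedFDeriv ℝ n Ψ ξ‖ ≤ 9 * S := by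
      intro n hn ξ
      rw [hΨ, hHs']
      refine (paperFT_bound (B := 2 * S) Hs.integrable (by positivity) hHq hHb n ξ).trans ?_
      have h3 : (3 : ℝ) ^ n ≤ 3 ^ 2 := pow_le_pow_right₀ (by norm_num) hn
      have hp2 : 1 / (4 * π ^ 2) ≤ 1 / 36 := by
        apply one_div_le_one_div_of_le <;> nlinarith
      calc 1 / (4 * π ^ 2) * (9 * (3 ^ n * (2 * S))) ≤ 1 / 36 * (9 * (3 ^ 2 * (2 * S))) := by gcongr
        _ ≤ 9 * S := by linarith
    have hη : 0 < min (ε * S) S := lt_min (by positivity) hpos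
    obtain ⟨Ψ', R, hR, hsupp, hder, hsyn⟩ := cutoff_exists Ψ (by positivity) hbd hη
    obtain ⟨fb, hfb, hfbi⟩ := FT2 Ψ'
    have hdiff : ∀ x, ‖fb x - H x‖ ≤ min (ε * S) S := by
      intro x
      rw [hfbi, ← hHs', hΨi]; exact hsyn x
    refine ⟨R, hR, fb, ?_, ?_, ?_, ?_⟩
    · intro ξ hξ; rw [← hfb]; exact hsupp ξ hξ
    · intro z hz
      rw [← hHeq z hz]
      exact (hdiff z).trans (min_le_left _ _)
    · intro z
      have h3 : ‖fb z‖ ≤ ‖fb z - H z‖ + ‖H z‖ := by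
        simpa using norm_add_le (fb z - H z) (H z)
      have := (hdiff z).trans (min_le_right _ _)
      rw [← hS]
      linarith [hHb z]
    · intro α hα ξ
      rw [← hfb]
      refine (mderiv2_bound Ψ'.smooth' α ξ).trans ((hder _ hα ξ).trans ?_)
      rw [← hS]
      linarith [min_le_right (ε * S) S]

lemma lip_of_bounds {Ψ : ℝ × ℝ → ℂ} (hd : Differentiable ℝ Ψ) {M : NNReal}
    (h1 : ∀ ξ, ‖pd1 Ψ ξ‖ ≤ M) (h2 : ∀ ξ, ‖pd2 Ψ ξ‖ ≤ M) : LipschitzWith (2 * M) Ψ := by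
  refine lipschitzWith_of_nnnorm_fderiv_le hd fun ξ => ?_
  rw [← NNReal.coe_le_coe, coe_nnnorm]
  refine ContinuousLinearMap.opNorm_le_bound _ (by positivity) fun v => ?_
  have e : v = v.1 • ((1, 0) : ℝ × ℝ) + v.2 • ((0, 1) : ℝ × ℝ) := by ext <;> simp
  have e2 : fderiv ℝ Ψ ξ v = v.1 • pd1 Ψ ξ + v.2 • pd2 Ψ ξ := by
    conv_lhs => rw [e]
    rw [map_add, map_smul, map_smul]; rfl
  rw [e2]
  calc ‖v.1 • pd1 Ψ ξ + v.2 • pd2 Ψ ξ‖ ≤ ‖v.1‖ * ‖pd1 Ψ ξ‖ + ‖v.2‖ * ‖pd2 Ψ ξ‖ := by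
        refine (norm_add_le _ _).trans ?_
        rw [norm_smul, norm_smul]
    _ ≤ ‖v‖ * M + ‖v‖ * M := by
        gcongr
        · exact norm_fst_le v
        · exact h1 ξ
        · exact norm_snd_le v
        · exact h2 ξ
    _ = _ := by push_cast; ring

lemma subseq_limit {d : ℝ} {M C : NNReal} {u : ℕ → ℝ × ℝ → ℂ} (hM : ∀ k ξ, ‖u k ξ‖ ≤ M)
    (hC : ∀ k, LipschitzWith C (u k)) (hs : ∀ k ξ, ξ ∉ sqIcc d → u k ξ = 0) :
    ∃ (φ : ℝ × ℝ → ℂ) (s : ℕ → ℕ), StrictMono s ∧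
      ∀ ξ, Filter.Tendsto (fun j => u (s j) ξ) Filter.atTop (nhds (φ ξ)) := by
  have : CompactSpace (sqIcc d) := isCompact_iff_compactSpace.mp (isCompact_sqIcc d)
  let F : ℕ → BoundedContinuousFunction (sqIcc d) ℂ := fun k =>
    BoundedContinuousFunction.mkOfCompact ⟨fun ξ => u k ξ, (hC k).continuous.comp continuous_subtype_val⟩
  have hF : ∀ k ξ, F k ξ = u k ξ := fun k ξ => rfl
  have hcomp : IsCompact (closure (Set.range F)) := by
    refine BoundedContinuousFunction.arzela_ascoli (Metric.closedBall 0 M) (isCompact_closedBall _ _) _ ?_ ?_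
    · rintro _ ξ ⟨k, rfl⟩
      rw [mem_closedBall_zero_iff, hF]; exact hM k ξ
    · apply UniformEquicontinuous.equicontinuous
      apply LipschitzWith.uniformEquicontinuous _ C
      rintro ⟨_, k, rfl⟩
      exact (hC k).comp (LipschitzWith.subtype_val _) |>.weaken (by simp)
  obtain ⟨G, _, s, hs1, hs2⟩ := hcomp.tendsto_subseq (fun k => subset_closure (Set.mem_range_self k))
  classical
  refine ⟨fun ξ => if hξ : ξ ∈ sqIcc d then G ⟨ξ, hξ⟩ else 0, s, hs1, fun ξ => ?_⟩
  by_cases hξ : ξ ∈ sqIcc d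
  · simp only [hξ, dite_true]
    exact (BoundedContinuousFunction.tendsto_iff_tendstoUniformly.mp hs2).tendsto_at ⟨ξ, hξ⟩
  · simp only [hξ, dite_false, hs _ ξ hξ]
    exact tendsto_const_nhds

lemma approx_limit {U : Set (ℝ × ℝ)} (hU : IsOpen U) (hQU : unitSq ⊆ U) {h : ℝ × ℝ → ℂ}
    (hsm : ContDiffOn ℝ (⊤ : ℕ∞) h U) {ε : ℝ} (hε0 : 0 < ε) :
    ∃ (φ : ℝ × ℝ → ℂ) (C : NNReal), Band (bandlimitConst unitSq h ε) φ ∧ LipschitzWith C φ ∧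
      ∀ z ∈ unitSq, ‖synth φ z - h z‖ ≤ ε * supOn h unitSq := by
  set c := bandlimitConst unitSq h ε with hc
  have hne := band_nonempty hU hQU hsm hε0
  have hex : ∀ k : ℕ, ∃ (a : ℝ) (fb Ψ : 𝓢(ℝ × ℝ, ℂ)), a < c + 1 / ((k : ℝ) + 1) ∧
      IsBandlimitedApprox unitSq h ε a fb ∧ ⇑Ψ = paperFT fb ∧ ∀ x, fb x = synth Ψ x := by
    intro k
    obtain ⟨a, ⟨_, fb, hfb⟩, hlt⟩ := Real.lt_sInf_add_pos hne (show (0:ℝ) < 1 / ((k : ℝ) + 1) by positivity)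
    obtain ⟨Ψ, h1, h2⟩ := FT1 fb
    exact ⟨a, fb, Ψ, hlt, hfb, h1, h2⟩
  choose a fb Ψ ha hfb hΨ hΨi using hex
  have hS0 : 0 ≤ supOn h unitSq := supOn_nonneg _ _
  let M : NNReal := ⟨10 * supOn h unitSq, by positivity⟩
  have hM : ∀ k ξ, ‖Ψ k ξ‖ ≤ M := by
    intro k ξ
    have := (hfb k).2.2.2 (0, 0) (by norm_num) ξ
    rw [← hΨ k] at this
    exact this
  have hC : ∀ k, LipschitzWith (2 * M) (Ψ k) := by
    intro k
    refine lip_of_bounds (Ψ k).differentiable (fun ξ => ?_) (fun ξ => ?_)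
    · have := (hfb k).2.2.2 (1, 0) (by norm_num) ξ
      rw [← hΨ k] at this
      exact this
    · have := (hfb k).2.2.2 (0, 1) (by norm_num) ξ
      rw [← hΨ k] at this
      exact this
  have hmono : ∀ {r t : ℝ}, r ≤ t → sqIcc r ⊆ sqIcc t := by
    intro r t hrt ξ hξ
    rw [mem_sqIcc] at hξ ⊢
    exact ⟨hξ.1.trans hrt, hξ.2.trans hrt⟩
  have hz : ∀ k ξ, ξ ∉ sqIcc (a k) → Ψ k ξ = 0 := by
    intro k ξ hξ; rw [hΨ k]; exact (hfb k).1 ξ hξ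
  have hz1 : ∀ k ξ, ξ ∉ sqIcc (c + 1) → Ψ k ξ = 0 := by
    intro k ξ hξ
    refine hz k ξ fun hm => hξ (hmono ?_ hm)
    have : 1 / ((k : ℝ) + 1) ≤ 1 := by
      rw [div_le_one (by positivity)]; linarith [(Nat.cast_nonneg k : (0:ℝ) ≤ k)]
    linarith [ha k]
  obtain ⟨φ, s, hs, hlim⟩ := subseq_limit hM hC hz1
  have hLip : LipschitzWith (2 * M) φ := by
    refine LipschitzWith.of_dist_le_mul fun x y => ?_
    exact le_of_tendsto ((hlim x).dist (hlim y)) (Filter.Eventually.of_forall fun j => (hC (s j)).dist_le_mul x y)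
  have hφz : ∀ ξ, ξ ∉ sqIcc c → φ ξ = 0 := by
    intro ξ hξ
    refine tendsto_nhds_unique (hlim ξ) (tendsto_const_nhds.congr' ?_)
    have hgt : c < max |ξ.1| |ξ.2| := by
      by_contra hle
      push Not at hle
      exact hξ (mem_sqIcc.mpr ⟨(le_max_left _ _).trans hle, (le_max_right _ _).trans hle⟩)
    have t1 : Filter.Tendsto (fun k : ℕ => c + 1 / ((k : ℝ) + 1)) Filter.atTop (nhds (c + 0)) :=
      tendsto_one_div_add_atTop_nhds_zero_nat.const_add c
    rw [add_zero] at t1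
    filter_upwards [(t1.comp hs.tendsto_atTop).eventually_lt_const hgt] with j hj
    refine (hz (s j) ξ fun hm => ?_).symm
    rw [mem_sqIcc] at hm
    have h1 := max_le hm.1 hm.2
    have h2 := ha (s j)
    simp only [Function.comp_apply] at hj
    linarith
  have hφint : Integrable φ :=
    hLip.continuous.integrable_of_hasCompactSupport (HasCompactSupport.intro (isCompact_sqIcc c) hφz)
  refine ⟨φ, 2 * M, ⟨hLip.continuous.measurable, hφint, hφz⟩, hLip, fun z hzq => ?_⟩
  have hsyn : Filter.Tendsto (fun j => synth (Ψ (s j)) z) Filter.atTop (nhds (synth φ z)) := by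
    unfold synth
    refine tendsto_integral_of_dominated_convergence ((sqIcc (c + 1)).indicator fun _ => (M : ℝ)) ?_ ?_ ?_ ?_
    · intro j
      exact (synth_integrable (Ψ (s j)).integrable z).1
    · rw [integrable_indicator_iff (measurableSet_sqIcc _)]
      exact integrableOn_const (isCompact_sqIcc _).measure_lt_top.ne
    · intro j
      filter_upwards with ξ
      rw [norm_mul, norm_cexp_I, mul_one]
      by_cases hξ : ξ ∈ sqIcc (c + 1)
      · rw [Set.indicator_of_mem hξ]; exact hM _ _
      · rw [Set.indicator_of_notMem hξ, hz1 _ _ hξ, norm_zero]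
    · filter_upwards with ξ
      exact (hlim ξ).mul_const _
  refine le_of_tendsto ((hsyn.sub_const (h z)).norm) (Filter.Eventually.of_forall fun j => ?_)
  rw [← hΨi]
  exact (hfb (s j)).2.1 z hzq

/-- Existence of a slowly-varying approximate solution to the Levin
equation `p_x + i g_x p = f` when `g_x` is of small magnitude (Theorem 12, leveq:thmlow). -/
theorem levin_pde_low_frequency
    (f : ℝ × ℝ → ℂ) (g : ℝ × ℝ → ℝ) (U : Set (ℝ × ℝ))
    (hUopen : IsOpen U) (hQU : unitSq ⊆ U)
    (hfsm : ContDiffOn ℝ (⊤ : ℕ∞) f U) (hgsm : ContDiffOn ℝ (⊤ : ℕ∞) g U)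
    (gx : ℝ × ℝ → ℝ) (hgx : ∀ z : ℝ × ℝ, gx z = fderiv ℝ g z ((1 : ℝ), (0 : ℝ)))
    (G₁ : ℝ) (hG₁ : IsGreatest {r : ℝ | ∃ z ∈ unitSq, r = |gx z|} G₁)
    (hG₁lt : G₁ < 1 / 2) (hgnz : ∃ z ∈ unitSq, gx z ≠ 0)
    (ε : ℝ) (hε0 : 0 < ε) (hε1 : ε < 1)
    (n : ℤ) (hn : n = ⌊Real.log ε / Real.log (2 * G₁)⌋) :
    ∃ pb : ℝ × ℝ → ℂ,
      ContDiff ℝ (⊤ : ℕ∞) pb ∧ PolyGrowth pb ∧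
      funcOrderAtMost (ftFunctional pb) 1 ∧
      funcSupport (ftFunctional pb) ⊆
        sqIcc (bandlimitConst unitSq f ε +
          (n : ℝ) * bandlimitConst unitSq (fun z => (gx z : ℂ)) ε) ∧
      (∀ z ∈ unitSq,
        ‖pd1 pb z + Complex.I * (gx z : ℂ) * pb z - f z‖ ≤
          3 * ε * (1 + G₁ / (1 - 2 * G₁)) * supOn f unitSq) ∧
      (∀ z ∈ unitSq, ‖pb z‖ ≤ 2 / (1 - 2 * G₁) * supOn f unitSq) ∧
      (∀ z ∈ unitSq, ‖pd1 pb z‖ ≤ 4 * (1 + G₁ / (1 - 2 * G₁)) * supOn f unitSq) := by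
  have hG0 : 0 < G₁ := by
    obtain ⟨z, hz, hne⟩ := hgnz
    exact (abs_pos.mpr hne).trans_le (hG₁.2 ⟨z, hz, rfl⟩)
  have hgle : ∀ z ∈ unitSq, |gx z| ≤ G₁ := fun z hz => hG₁.2 ⟨z, hz, rfl⟩
  set gc : ℝ × ℝ → ℂ := fun z => (gx z : ℂ) with hgc
  have hgcsm : ContDiffOn ℝ (⊤ : ℕ∞) gc U := by
    have h1 : ContDiffOn ℝ (⊤ : ℕ∞) (fderiv ℝ g) U :=
      hgsm.fderiv_of_isOpen hUopen (by simp)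
    have h2 : ContDiffOn ℝ (⊤ : ℕ∞) (fun z => fderiv ℝ g z ((1 : ℝ), (0 : ℝ))) U :=
      h1.clm_apply contDiffOn_const
    have h3 : gc = fun z => Complex.ofRealCLM (fderiv ℝ g z ((1 : ℝ), (0 : ℝ))) := by
      ext z; simp [hgc, hgx]
    rw [h3]
    exact Complex.ofRealCLM.contDiff.comp_contDiffOn h2
  have hsupg : supOn gc unitSq = G₁ := by
    have hgcc : ContinuousOn gc unitSq := hgcsm.continuousOn.mono hQU
    apply le_antisymm
    · have : Nonempty unitSq := by obtain ⟨z, hz, _⟩ := hgnz; exact ⟨⟨z, hz⟩⟩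
      refine ciSup_le fun z => ?_
      simpa [hgc] using hgle z z.2
    · obtain ⟨z, hz, hzG⟩ := hG₁.1
      have := le_supOn hgcc hz
      rw [hzG]; simpa [hgc] using this
  set S := supOn f unitSq with hSdef
  have hS : 0 ≤ S := supOn_nonneg _ _
  obtain ⟨φ, Cφ, hφ, hLφ, hφa⟩ := approx_limit hUopen hQU hfsm hε0
  obtain ⟨γ, Cγ, hγ, hLγ, hγa⟩ := approx_limit hUopen hQU hgcsm hε0
  have hfle : ∀ z ∈ unitSq, ‖f z‖ ≤ S := fun z hz => le_supOn (hfsm.continuousOn.mono hQU) hz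
  have hφb : ∀ z ∈ unitSq, ‖synth φ z‖ ≤ 2 * S := by
    intro z hz
    have h1 := hφa z hz
    have h2 := hfle z hz
    have h3 : ‖synth φ z‖ ≤ ‖synth φ z - f z‖ + ‖f z‖ := by
      simpa using norm_add_le (synth φ z - f z) (f z)
    nlinarith
  have hgcle : ∀ z ∈ unitSq, ‖gc z‖ ≤ G₁ := fun z hz => by simpa [hgc] using hgle z hz
  rw [hsupg] at hγa
  have hγb : ∀ z ∈ unitSq, ‖synth γ z‖ ≤ 2 * G₁ := by
    intro z hz
    have h1 := hγa z hz
    have h2 := hgcle z hz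
    have h3 : ‖synth γ z‖ ≤ ‖synth γ z - gc z‖ + ‖gc z‖ := by
      simpa using norm_add_le (synth γ z - gc z) (gc z)
    nlinarith
  have hD : 0 < 1 - 2 * G₁ := by linarith
  have hcf := bandlimitConst_nonneg unitSq f ε
  have hcg := bandlimitConst_nonneg unitSq gc ε
  have hlog2 : Real.log (2 * G₁) < 0 := Real.log_neg (by linarith) (by linarith)
  have hloge : Real.log ε < 0 := Real.log_neg hε0 hε1
  have hn0 : 0 ≤ n := by
    rw [hn]; exact Int.floor_nonneg.mpr (div_nonneg_of_nonpos hloge.le hlog2.le)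
  obtain ⟨m, rfl⟩ := Int.eq_ofNat_of_zero_le hn0
  have hpow : (2 * G₁) ^ (m + 1) ≤ ε := by
    have h1 : Real.log ε / Real.log (2 * G₁) < (m : ℝ) + 1 := by
      have := Int.lt_floor_add_one (Real.log ε / Real.log (2 * G₁))
      rw [← hn] at this
      simpa using this
    rw [div_lt_iff_of_neg hlog2] at h1
    rw [← Real.log_le_log_iff (by positivity) hε0, Real.log_pow]
    push_cast
    exact h1.le
  obtain ⟨φk, φt, hk, ht, hb, hd, he⟩ :=
    iterate_exists hcf hcg hφ hγ hLγ hG0.le hD hS hφb hγb m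
  have hJk : ∀ z ∈ unitSq, ‖Jop (synth φk) z‖ ≤ 2 * S * (2 * G₁) ^ m :=
    fun z hz => Jop_bound (by positivity) hb hz
  have hpm : (0:ℝ) < (2 * G₁) ^ m := by positivity
  have hdiff : ∀ z ∈ unitSq, ‖Jop (synth φt) z - Jop (synth φk) z‖ ≤ 2 * S / (1 - 2 * G₁) := by
    intro z hz
    rw [le_div_iff₀ hD, mul_comm]
    refine (hd z hz).trans ?_
    nlinarith
  refine ⟨Jop (synth φt), contDiff_Jop ht, growth_Jop ht, order_Jop ht, ?_, ?_, ?_, ?_⟩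
  · have := support_Jop (by positivity) ht
    simpa using this
  · intro z hz
    rw [pd1_Jop ht, he]
    have e : synth φ z - Complex.I * synth γ z * (Jop (synth φt) z - Jop (synth φk) z)
        + Complex.I * (gx z : ℂ) * Jop (synth φt) z - f z
        = (synth φ z - f z) - Complex.I * ((synth γ z - gc z) * (Jop (synth φt) z - Jop (synth φk) z))
          + Complex.I * (gc z * Jop (synth φk) z) := by
      simp only [hgc]; ring
    rw [e]
    have n1 : ‖(synth γ z - gc z) * (Jop (synth φt) z - Jop (synth φk) z)‖
        ≤ ε * G₁ * (2 * S / (1 - 2 * G₁)) := by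
      rw [norm_mul]
      exact mul_le_mul (hγa z hz) (hdiff z hz) (norm_nonneg _) (by positivity)
    have n2 : ‖gc z * Jop (synth φk) z‖ ≤ ε * S := by
      rw [norm_mul]
      calc ‖gc z‖ * ‖Jop (synth φk) z‖ ≤ G₁ * (2 * S * (2 * G₁) ^ m) :=
            mul_le_mul (hgcle z hz) (hJk z hz) (norm_nonneg _) hG0.le
        _ = (2 * G₁) ^ (m + 1) * S := by ring
        _ ≤ ε * S := by gcongr
    have n3 := hφa z hz
    have tri := norm_add_le ((synth φ z - f z) - Complex.I * ((synth γ z - gc z) * (Jop (synth φt) z - Jop (synth φk) z)))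
      (Complex.I * (gc z * Jop (synth φk) z))
    have tri2 := norm_sub_le (synth φ z - f z) (Complex.I * ((synth γ z - gc z) * (Jop (synth φt) z - Jop (synth φk) z)))
    rw [norm_mul Complex.I, Complex.norm_I, one_mul] at tri tri2
    have hp1 : 0 ≤ ε * S := by positivity
    have hp2 : 0 ≤ ε * S * (G₁ / (1 - 2 * G₁)) := by positivity
    have e3 : ε * G₁ * (2 * S / (1 - 2 * G₁)) = 2 * (ε * S * (G₁ / (1 - 2 * G₁))) := by ring
    have e4 : 3 * ε * (1 + G₁ / (1 - 2 * G₁)) * S = 3 * (ε * S) + 3 * (ε * S * (G₁ / (1 - 2 * G₁))) := by ring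
    rw [e4]; rw [e3] at n1
    linarith
  · intro z hz
    have tri : ‖Jop (synth φt) z‖ ≤ ‖Jop (synth φt) z - Jop (synth φk) z‖ + ‖Jop (synth φk) z‖ := by
      simpa using norm_add_le (Jop (synth φt) z - Jop (synth φk) z) (Jop (synth φk) z)
    rw [div_mul_eq_mul_div, le_div_iff₀ hD]
    have a := hd z hz
    have b := hJk z hz
    have c : (1 - 2 * G₁) * ‖Jop (synth φk) z‖ ≤ (1 - 2 * G₁) * (2 * S * (2 * G₁) ^ m) := by gcongr
    have d : (1 - 2 * G₁) * ‖Jop (synth φt) z‖ ≤ (1 - 2 * G₁) * (‖Jop (synth φt) z - Jop (synth φk) z‖ + ‖Jop (synth φk) z‖) := by gcongr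
    have : 0 ≤ G₁ * (S * (2 * G₁) ^ m) := by positivity
    nlinarith
  · intro z hz
    rw [pd1_Jop ht, he]
    have tri := norm_sub_le (synth φ z) (Complex.I * synth γ z * (Jop (synth φt) z - Jop (synth φk) z))
    rw [norm_mul, norm_mul, Complex.norm_I, one_mul] at tri
    have n1 := mul_le_mul (hγb z hz) (hdiff z hz) (norm_nonneg _) (by positivity)
    have e3 : 2 * G₁ * (2 * S / (1 - 2 * G₁)) = 4 * (S * (G₁ / (1 - 2 * G₁))) := by ring
    have e4 : 4 * (1 + G₁ / (1 - 2 * G₁)) * S = 4 * S + 4 * (S * (G₁ / (1 - 2 * G₁))) := by ring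
    rw [e4]; rw [e3] at n1
    have := hφb z hz
    linarith
end
end

section
/- Suppose f : [−1,1]² → ℂ and g : [−1,1]² → ℝ are infinitely differentiable with G₀ := min_{[−1,1]²} |∂g/∂x| > 0, and set G₁ = max_{[−1,1]²} |∂g/∂x|, W = max_{y∈[−1,1]} |∫_{−1}^{1} (∂g/∂x)(x,y) dx|, and M = sup_{[−1,1]²} |f|. Let 0 < ε < 1/2, let C ≥ 1, and suppose p_b : [−1,1]² → ℂ is infinitely differentiable and satisfies: |∂p_b/∂x + i (∂g/∂x) p_b − f| ≤ ε (G₁/G₀) M pointwise on [−1,1]²; sup |p_b| ≤ C (W/G₀) min{1, 1/W} M; and sup |∂p_b/∂x| ≤ C (G₁/G₀) min{1, 1/W} M. Suppose further that k ≥ 2 is such that sup |P_k[p_b] − p_b| ≤ ε sup |p_b|, sup |∂/∂x P_k[p_b] − ∂p_b/∂x| ≤ ε sup |∂p_b/∂x|, sup |P_k[∂g/∂x] − ∂g/∂x| ≤ ε G₁, and sup |P_{2k−1}[f] − f| ≤ ε M (all sups over [−1,1]²). Then for all (x,y) ∈ [−1,1]²: |∂/∂x P_k[p_b](x,y) + i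 P_k[∂g/∂x](x,y) · P_k[p_b](x,y) − P_{2k−1}[f](x,y)| ≤ 6 ε C (G₁/G₀) M. -/
open Real

noncomputable section

/-- The `k`-point Chebyshev grid on `[-1,1]`: the nodes `t_{j,k} = cos((k-j)π/(k-1))`,
`j = 1, …, k`, here indexed by `j : Fin k` (so the paper's index is `j + 1`). -/
def chebNode (k : ℕ) (j : Fin k) : ℝ :=
  Real.cos (((k : ℝ) - 1 - (j : ℝ)) * π / ((k : ℝ) - 1))

/-- Discretization error of the Levin collocation scheme: given a
slowly-varying approximate solution `p_b` of the Levin equation `p_x + i g_x p = f` and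
accurate Chebyshev interpolants `P_k[p_b]`, `P_k[g_x]`, `P_{2k-1}[f]`, the interpolated
residual satisfies
`|∂ₓP_k[p_b] + i P_k[g_x] P_k[p_b] - P_{2k-1}[f]| ≤ 6εC(G₁/G₀)M` on `[-1,1]²`. -/
theorem levin_collocation_residual_bound
    (f : ℝ × ℝ → ℂ) (g : ℝ × ℝ → ℝ) (U : Set (ℝ × ℝ))
    (hUopen : IsOpen U) (hQU : unitSq ⊆ U)
    (hfsm : ContDiffOn ℝ (⊤ : ℕ∞) f U) (hgsm : ContDiffOn ℝ (⊤ : ℕ∞) g U)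
    (gx : ℝ × ℝ → ℝ) (hgx : ∀ z : ℝ × ℝ, gx z = fderiv ℝ g z ((1 : ℝ), (0 : ℝ)))
    (G₀ G₁ W M : ℝ)
    (hG₀ : IsLeast {r : ℝ | ∃ z ∈ unitSq, r = |gx z|} G₀) (hG₀pos : 0 < G₀)
    (hG₁ : IsGreatest {r : ℝ | ∃ z ∈ unitSq, r = |gx z|} G₁)
    (hW : IsGreatest {r : ℝ | ∃ y ∈ Set.Icc (-1 : ℝ) 1,
      r = |∫ t in (-1 : ℝ)..1, gx (t, y)|} W)
    (hM : M = supOn f unitSq)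
    (ε : ℝ) (hε0 : 0 < ε) (hε : ε < 1 / 2) (C : ℝ) (hC : 1 ≤ C)
    (pb : ℝ × ℝ → ℂ)
    (V : Set (ℝ × ℝ)) (hVopen : IsOpen V) (hQV : unitSq ⊆ V)
    (hpbsm : ContDiffOn ℝ (⊤ : ℕ∞) pb V)
    (hres : ∀ z ∈ unitSq,
      ‖pd1 pb z + Complex.I * (gx z : ℂ) * pb z - f z‖ ≤ ε * (G₁ / G₀) * M)
    (hpb : ∀ z ∈ unitSq, ‖pb z‖ ≤ C * (W / G₀) * min 1 W⁻¹ * M)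
    (hpbx : ∀ z ∈ unitSq, ‖pd1 pb z‖ ≤ C * (G₁ / G₀) * min 1 W⁻¹ * M)
    (k : ℕ) (hk : 2 ≤ k)
    (ap : Fin k → Fin k → ℂ) (Pp : ℝ × ℝ → ℂ)
    (hPp : ∀ z : ℝ × ℝ,
      Pp z = ∑ i : Fin k, ∑ j : Fin k, ap i j * (z.1 : ℂ) ^ (i : ℕ) * (z.2 : ℂ) ^ (j : ℕ))
    (hPpinterp : ∀ i j : Fin k,
      Pp (chebNode k i, chebNode k j) = pb (chebNode k i, chebNode k j))
    (ag : Fin k → Fin k → ℝ) (Pg : ℝ × ℝ → ℝ)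
    (hPg : ∀ z : ℝ × ℝ,
      Pg z = ∑ i : Fin k, ∑ j : Fin k, ag i j * z.1 ^ (i : ℕ) * z.2 ^ (j : ℕ))
    (hPginterp : ∀ i j : Fin k,
      Pg (chebNode k i, chebNode k j) = gx (chebNode k i, chebNode k j))
    (af : Fin (2 * k - 1) → Fin (2 * k - 1) → ℂ) (Pf : ℝ × ℝ → ℂ)
    (hPf : ∀ z : ℝ × ℝ,
      Pf z = ∑ i : Fin (2 * k - 1), ∑ j : Fin (2 * k - 1),
        af i j * (z.1 : ℂ) ^ (i : ℕ) * (z.2 : ℂ) ^ (j : ℕ))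
    (hPfinterp : ∀ i j : Fin (2 * k - 1),
      Pf (chebNode (2 * k - 1) i, chebNode (2 * k - 1) j) =
        f (chebNode (2 * k - 1) i, chebNode (2 * k - 1) j))
    (hPperr : ∀ z ∈ unitSq, ‖Pp z - pb z‖ ≤ ε * supOn pb unitSq)
    (hPpxerr : ∀ z ∈ unitSq, ‖pd1 Pp z - pd1 pb z‖ ≤ ε * supOn (pd1 pb) unitSq)
    (hPgerr : ∀ z ∈ unitSq, |Pg z - gx z| ≤ ε * G₁)
    (hPferr : ∀ z ∈ unitSq, ‖Pf z - f z‖ ≤ ε * M) :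
    ∀ z ∈ unitSq,
      ‖pd1 Pp z + Complex.I * (Pg z : ℂ) * Pp z - Pf z‖ ≤ 6 * ε * C * (G₁ / G₀) * M := by
  intro z hz
  have hM0 : 0 ≤ M := by
    rw [hM]; exact Real.iSup_nonneg fun _ => norm_nonneg _
  have hG10 : G₀ ≤ G₁ := hG₁.2 hG₀.1
  have hG1pos : 0 < G₁ := lt_of_lt_of_le hG₀pos hG10
  have hR : 1 ≤ G₁ / G₀ := by rwa [one_le_div hG₀pos]
  have hW0 : 0 ≤ W := by
    obtain ⟨y, _, hy⟩ := hW.1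
    rw [hy]; exact abs_nonneg _
  have hmin1 : W * min 1 W⁻¹ ≤ 1 :=
    (mul_le_mul_of_nonneg_left (min_le_right _ _) hW0).trans mul_inv_le_one
  have hC0 : 0 ≤ C := by linarith
  have hB0 : 0 ≤ C / G₀ * M := by positivity
  have hp : ∀ z ∈ unitSq, ‖pb z‖ ≤ C / G₀ * M := fun z hz => by
    refine (hpb z hz).trans ?_
    have : C * (W / G₀) * min 1 W⁻¹ * M = (C / G₀ * M) * (W * min 1 W⁻¹) := by ring
    rw [this]
    exact mul_le_of_le_one_right hB0 hmin1
  have hD0 : 0 ≤ C * (G₁ / G₀) * M := by positivity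
  have hpx : ∀ z ∈ unitSq, ‖pd1 pb z‖ ≤ C * (G₁ / G₀) * M := fun z hz => by
    refine (hpbx z hz).trans ?_
    have : C * (G₁ / G₀) * min 1 W⁻¹ * M = (C * (G₁ / G₀) * M) * min 1 W⁻¹ := by ring
    rw [this]
    exact mul_le_of_le_one_right hD0 (min_le_left _ _)
  have hS : supOn pb unitSq ≤ C / G₀ * M := Real.iSup_le (fun z => hp z z.2) hB0
  have hSx : supOn (pd1 pb) unitSq ≤ C * (G₁ / G₀) * M := Real.iSup_le (fun z => hpx z z.2) hD0
  have e1 := hres z hz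
  have e2 := (hPpxerr z hz).trans (mul_le_mul_of_nonneg_left hSx hε0.le)
  have e3 := (hPperr z hz).trans (mul_le_mul_of_nonneg_left hS hε0.le)
  have e4 := hPgerr z hz
  have e5 := hPferr z hz
  have e6 := hp z hz
  have e7 : |gx z| ≤ G₁ := hG₁.2 ⟨z, hz, rfl⟩
  have e8 : |Pg z| ≤ (1 + ε) * G₁ := by
    have := abs_add_le (Pg z - gx z) (gx z)
    rw [sub_add_cancel] at this
    linarith
  have t1 : ‖Complex.I * (Pg z : ℂ) * (Pp z - pb z)‖ ≤ (1 + ε) * G₁ * (ε * (C / G₀ * M)) := by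
    rw [norm_mul, norm_mul, Complex.norm_I, one_mul, Complex.norm_real, Real.norm_eq_abs]
    exact mul_le_mul e8 e3 (norm_nonneg _) (by positivity)
  have t2 : ‖Complex.I * ((Pg z - gx z : ℝ) : ℂ) * pb z‖ ≤ ε * G₁ * (C / G₀ * M) := by
    rw [norm_mul, norm_mul, Complex.norm_I, one_mul, Complex.norm_real, Real.norm_eq_abs]
    exact mul_le_mul e4 e6 (norm_nonneg _) (by positivity)
  have key : pd1 Pp z + Complex.I * (Pg z : ℂ) * Pp z - Pf z =
      (pd1 pb z + Complex.I * (gx z : ℂ) * pb z - f z) + (pd1 Pp z - pd1 pb z)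
      + Complex.I * (Pg z : ℂ) * (Pp z - pb z)
      + Complex.I * ((Pg z - gx z : ℝ) : ℂ) * pb z - (Pf z - f z) := by
    push_cast; ring
  rw [key]
  refine (norm_sub_le _ _).trans ?_
  refine (add_le_add_left norm_add₄_le _).trans ?_
  set D := C * (G₁ / G₀) * M with hD
  have r1 : ε * (G₁ / G₀) * M ≤ ε * D := by
    have : (G₁ / G₀ * M) * 1 ≤ (G₁ / G₀ * M) * C := mul_le_mul_of_nonneg_left hC (by positivity)
    calc _ = ε * ((G₁ / G₀ * M) * 1) := by ring
      _ ≤ ε * ((G₁ / G₀ * M) * C) := mul_le_mul_of_nonneg_left this hε0.le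
      _ = _ := by rw [hD]; ring
  have r2 : ε * M ≤ ε * D := by
    refine le_trans ?_ r1
    have : M * 1 ≤ M * (G₁ / G₀) := mul_le_mul_of_nonneg_left hR hM0
    nlinarith
  have r3 : (1 + ε) * G₁ * (ε * (C / G₀ * M)) = (1 + ε) * (ε * D) := by rw [hD]; ring
  have r4 : ε * G₁ * (C / G₀ * M) = ε * D := by rw [hD]; ring
  have r5 : 6 * ε * C * (G₁ / G₀) * M = 6 * (ε * D) := by rw [hD]; ring
  have hED : 0 ≤ ε * D := by positivity
  have r6 : ε * (ε * D) ≤ 1 / 2 * (ε * D) := mul_le_mul_of_nonneg_right hε.le hED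
  rw [r5]
  linarith
end
end
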